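/- arXiv:1808.07908 — 7 statements merged into one kernel-verified Lean document; each statement's English description precedes it below -/
import Mathlib

section
/- Let n ≥ 1 be an integer, let p > n with 1/p + 1/q = 1, and let 0 < α < n < β. Let k : ℝⁿ × ℝⁿ → ℂ be measurable and suppose there is a constant C > 0 such that |k(x+y, y)| ≤ C · min(1, |x|/|y|) · |x|^(−α) · ⟨x⟩^(−(β−α)) for almost every x, y ∈ ℝⁿ with y ≠ 0. Then the mixed norm (∫_{ℝⁿ} ( ∫_{ℝⁿ} |k(x,y)|^q dx )^{p/q} dy )^{1/p} is finite, and is bounded by a constant depending only on n, p, α, β and C. -/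
open MeasureTheory
open scoped NNReal ENNReal

noncomputable def wgt (n : ℕ) (a b : ℝ) (x : EuclideanSpace ℝ (Fin n)) : ℝ :=
  if ‖x‖ ≤ 1 then ‖x‖ ^ (-a) else ‖x‖ ^ (-b)

lemma wgt_integrable (n : ℕ) (hn : 1 ≤ n) (a b : ℝ) (ha : a < n) (hb : n < b) :
    Integrable (wgt n a b) := by
  have : Nonempty (Fin n) := ⟨⟨0, hn⟩⟩
  have : Nontrivial (EuclideanSpace ℝ (Fin n)) := inferInstance
  have key := integrable_fun_norm_addHaar (volume : Measure (EuclideanSpace ℝ (Fin n)))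
    (f := fun r : ℝ => if r ≤ 1 then r ^ (-a) else r ^ (-b))
  refine key.2 ?_
  rw [← Set.Ioc_union_Ioi_eq_Ioi (zero_le_one (α := ℝ)), integrableOn_union]
  have hd : Module.finrank ℝ (EuclideanSpace ℝ (Fin n)) = n := by simp
  rw [hd]
  have e : ∀ r : ℝ, 0 < r → ∀ c : ℝ, r ^ ((n : ℝ) - 1 - c) = r ^ (n - 1) * r ^ (-c) := by
    intro r hr c
    rw [← Real.rpow_natCast, ← Real.rpow_add hr, Nat.cast_sub hn]
    congr 1
    push_cast
    ring
  constructor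
  · have h := (intervalIntegral.intervalIntegrable_rpow' (a := 0) (b := 1)
      (r := (n : ℝ) - 1 - a) (by linarith))
    rw [intervalIntegrable_iff_integrableOn_Ioc_of_le zero_le_one] at h
    refine h.congr_fun (fun r hr => ?_) measurableSet_Ioc
    simp only [smul_eq_mul, if_pos hr.2]
    exact e r hr.1 a
  · have h := integrableOn_Ioi_rpow_of_lt (a := (n : ℝ) - 1 - b) (c := 1)
      (by linarith) zero_lt_one
    refine h.congr_fun (fun r hr => ?_) measurableSet_Ioi
    have hr' : (1 : ℝ) < r := hr
    simp only [smul_eq_mul, if_neg (not_le.2 hr')]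
    exact e r (by linarith) b

lemma wgt_fin (n : ℕ) (hn : 1 ≤ n) (a b : ℝ) (ha : a < n) (hb : n < b) :
    ∫⁻ x, ENNReal.ofReal (wgt n a b x) ≠ ∞ :=
  (wgt_integrable n hn a b ha hb).lintegral_lt_top.ne

lemma wgt_nonneg (n : ℕ) (a b : ℝ) (x : EuclideanSpace ℝ (Fin n)) : 0 ≤ wgt n a b x := by
  unfold wgt
  split_ifs <;> positivity

lemma ptw (n : ℕ) (q α β C θ : ℝ) (hq : 0 < q) (hC : 0 < C) (hαβ : α < β)
    (h0 : 0 ≤ θ) (h1 : θ ≤ 1)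
    (x y : EuclideanSpace ℝ (Fin n)) (hx : x ≠ 0) (hy : y ≠ 0) :
    (C * min 1 (‖x‖ / ‖y‖) * ‖x‖ ^ (-α) * Real.sqrt (1 + ‖x‖ ^ 2) ^ (-(β - α))) ^ q
      ≤ (C * ‖y‖ ^ (-θ)) ^ q * wgt n (q * (α - θ)) (q * (β - θ)) x := by
  have hx' : 0 < ‖x‖ := norm_pos_iff.2 hx
  have hy' : 0 < ‖y‖ := norm_pos_iff.2 hy
  have hm : min 1 (‖x‖ / ‖y‖) ≤ ‖y‖ ^ (-θ) * ‖x‖ ^ θ := by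
    have e : ‖y‖ ^ (-θ) * ‖x‖ ^ θ = (‖x‖ / ‖y‖) ^ θ := by
      rw [Real.div_rpow hx'.le hy'.le, Real.rpow_neg hy'.le]; field_simp
    rw [e]
    have ht : 0 < ‖x‖ / ‖y‖ := by positivity
    rcases le_total 1 (‖x‖ / ‖y‖) with h | h
    · exact (min_le_left _ _).trans (Real.one_le_rpow h h0)
    · refine (min_le_right _ _).trans ?_
      simpa using Real.rpow_le_rpow_of_exponent_ge ht h h1
  have hs1 : 1 ≤ Real.sqrt (1 + ‖x‖ ^ 2) := by
    rw [Real.one_le_sqrt]; nlinarith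
  have hs2 : ‖x‖ ≤ Real.sqrt (1 + ‖x‖ ^ 2) := Real.le_sqrt_of_sq_le (by linarith)
  have hg : ∃ g : ℝ, 0 ≤ g ∧ g ^ q = wgt n (q * (α - θ)) (q * (β - θ)) x ∧
      ‖x‖ ^ θ * ‖x‖ ^ (-α) * Real.sqrt (1 + ‖x‖ ^ 2) ^ (-(β - α)) ≤ g := by
    unfold wgt
    split_ifs with h
    · refine ⟨‖x‖ ^ (θ - α), by positivity, ?_, ?_⟩
      · rw [← Real.rpow_mul hx'.le]; congr 1; ring
      · rw [← Real.rpow_add hx', ← sub_eq_add_neg]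
        exact mul_le_of_le_one_right (by positivity)
          (Real.rpow_le_one_of_one_le_of_nonpos hs1 (by linarith))
    · refine ⟨‖x‖ ^ (θ - β), by positivity, ?_, ?_⟩
      · rw [← Real.rpow_mul hx'.le]; congr 1; ring
      · calc _ ≤ ‖x‖ ^ θ * ‖x‖ ^ (-α) * ‖x‖ ^ (-(β - α)) :=
              mul_le_mul_of_nonneg_left
                (Real.rpow_le_rpow_of_nonpos hx' hs2 (by linarith)) (by positivity)
          _ = _ := by
              rw [← Real.rpow_add hx', ← Real.rpow_add hx']; congr 1; ring
  obtain ⟨g, hg0, hgq, hg⟩ := hg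
  rw [← hgq, ← Real.mul_rpow (by positivity) hg0]
  refine Real.rpow_le_rpow (by positivity) ?_ hq.le
  calc _ ≤ C * (‖y‖ ^ (-θ) * ‖x‖ ^ θ) * ‖x‖ ^ (-α) * Real.sqrt (1 + ‖x‖ ^ 2) ^ (-(β - α)) := by
        gcongr
    _ = C * ‖y‖ ^ (-θ) * (‖x‖ ^ θ * ‖x‖ ^ (-α) * Real.sqrt (1 + ‖x‖ ^ 2) ^ (-(β - α))) := by ring
    _ ≤ _ := by gcongr

lemma inner_bd (n : ℕ) (hn : 1 ≤ n) (p q α β C θ : ℝ) (hp : 0 < p) (hq : 0 < q) (hC : 0 < C)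
    (hαβ : α < β) (h0 : 0 ≤ θ) (h1 : θ ≤ 1)
    (k : EuclideanSpace ℝ (Fin n) × EuclideanSpace ℝ (Fin n) → ℂ)
    (y : EuclideanSpace ℝ (Fin n)) (hy : y ≠ 0)
    (hk : ∀ᵐ x : EuclideanSpace ℝ (Fin n), ‖k (x + y, y)‖ ≤
            C * min 1 (‖x‖ / ‖y‖) * ‖x‖ ^ (-α) *
              Real.sqrt (1 + ‖x‖ ^ 2) ^ (-(β - α))) :
    (∫⁻ x : EuclideanSpace ℝ (Fin n), (‖k (x, y)‖₊ : ℝ≥0∞) ^ q) ^ (p / q) ≤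
      ENNReal.ofReal (C ^ p * ‖y‖ ^ (-(p * θ))) *
      (∫⁻ x, ENNReal.ofReal (wgt n (q * (α - θ)) (q * (β - θ)) x)) ^ (p / q) := by
  have : Nonempty (Fin n) := ⟨⟨0, hn⟩⟩
  have : Nontrivial (EuclideanSpace ℝ (Fin n)) := inferInstance
  have hy' : 0 < ‖y‖ := norm_pos_iff.2 hy
  have e : ENNReal.ofReal (C ^ p * ‖y‖ ^ (-(p * θ))) =
      (ENNReal.ofReal ((C * ‖y‖ ^ (-θ)) ^ q)) ^ (p / q) := by
    rw [ENNReal.ofReal_rpow_of_nonneg (by positivity) (by positivity),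
      ← Real.rpow_mul (by positivity), mul_div_cancel₀ _ hq.ne',
      Real.mul_rpow hC.le (by positivity), ← Real.rpow_mul hy'.le]
    congr 3; ring
  rw [e, ← ENNReal.mul_rpow_of_nonneg _ _ (by positivity)]
  refine ENNReal.rpow_le_rpow ?_ (by positivity)
  rw [← lintegral_add_right_eq_self (fun x => (‖k (x, y)‖₊ : ℝ≥0∞) ^ q) y,
    ← lintegral_const_mul' _ _ ENNReal.ofReal_ne_top]
  refine lintegral_mono_ae ?_
  have hne : ∀ᵐ x : EuclideanSpace ℝ (Fin n), x ≠ 0 := by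
    simp [ae_iff]
  filter_upwards [hk, hne] with x hx hx0
  rw [← ENNReal.ofReal_mul (by positivity)]
  have e2 : (‖k (x + y, y)‖₊ : ℝ≥0∞) ^ q = ENNReal.ofReal (‖k (x + y, y)‖ ^ q) := by
    rw [← ENNReal.ofReal_rpow_of_nonneg (norm_nonneg _) hq.le, ofReal_norm]; rfl
  rw [e2]
  refine ENNReal.ofReal_le_ofReal ?_
  exact (Real.rpow_le_rpow (norm_nonneg _) hx hq.le).trans
    (ptw n q α β C θ hq hC hαβ h0 h1 x y hx0 hy)

/-- Schatten-class kernel estimate: if `|k(x+y,y)| ≤ C min(1,|x|/|y|) |x|^{-α} ⟨x⟩^{-(β-α)}`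
with `0 < α < n < β` and `p > n`, `1/p + 1/q = 1`, then the mixed norm
`(∫ (∫ |k(x,y)|^q dx)^{p/q} dy)^{1/p}` is finite, bounded by a constant depending only on
`n, p, α, β, C`. -/
theorem mixed_norm_kernel_bound (n : ℕ) (hn : 1 ≤ n) (p q α β C : ℝ)
    (hpn : (n : ℝ) < p) (hpq : 1 / p + 1 / q = 1)
    (hα : 0 < α) (hαn : α < n) (hnβ : (n : ℝ) < β) (hC : 0 < C) :
    ∃ B : ℝ≥0,
      ∀ k : EuclideanSpace ℝ (Fin n) × EuclideanSpace ℝ (Fin n) → ℂ,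
        Measurable k →
        (∀ᵐ z : EuclideanSpace ℝ (Fin n) × EuclideanSpace ℝ (Fin n), z.2 ≠ 0 →
          ‖k (z.1 + z.2, z.2)‖ ≤
            C * min 1 (‖z.1‖ / ‖z.2‖) * ‖z.1‖ ^ (-α) *
              Real.sqrt (1 + ‖z.1‖ ^ 2) ^ (-(β - α))) →
        (∫⁻ y : EuclideanSpace ℝ (Fin n),
            (∫⁻ x : EuclideanSpace ℝ (Fin n), (‖k (x, y)‖₊ : ℝ≥0∞) ^ q) ^ (p / q)) ^ (1 / p)
          ≤ (B : ℝ≥0∞) := by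
  have : Nonempty (Fin n) := ⟨⟨0, hn⟩⟩
  have : Nontrivial (EuclideanSpace ℝ (Fin n)) := inferInstance
  have hn1 : (1 : ℝ) ≤ n := by exact_mod_cast hn
  have hp : 0 < p := by linarith
  have hnp : (n : ℝ) / p < 1 := by rw [div_lt_one hp]; exact hpn
  have hnp0 : 0 < (n : ℝ) / p := by positivity
  have hq' : 0 < 1 / q := by
    have : 1 / p < 1 := by rw [div_lt_one hp]; linarith
    linarith
  have hq : 0 < q := one_div_pos.1 hq'
  have hsum : (n : ℝ) / p + n / q = n := by
    have : (n : ℝ) * (1 / p + 1 / q) = n := by rw [hpq, mul_one]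
    calc (n : ℝ) / p + n / q = n * (1 / p + 1 / q) := by ring
      _ = n := this
  obtain ⟨θ, h1, h2⟩ : ∃ θ, max 0 (α - n / q) < θ ∧ θ < n / p :=
    exists_between (max_lt hnp0 (by linarith))
  obtain ⟨η, h3, h4⟩ : ∃ η, n / p < η ∧ η < min 1 (β - n / q) :=
    exists_between (lt_min hnp (by linarith))
  have h1a := (max_lt_iff.1 h1).1
  have h1b := (max_lt_iff.1 h1).2
  have h4a := (lt_min_iff.1 h4).1
  have h4b := (lt_min_iff.1 h4).2
  have c1 : ∀ t : ℝ, t < n / q → q * t < n := fun t ht => by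
    rw [lt_div_iff₀ hq] at ht; linarith
  have c2 : ∀ t : ℝ, n / q < t → n < q * t := fun t ht => by
    rw [div_lt_iff₀ hq] at ht; linarith
  have d1 : p * θ < n := by rw [lt_div_iff₀ hp] at h2; linarith
  have d2 : n < p * η := by rw [div_lt_iff₀ hp] at h3; linarith
  have J1 := wgt_fin n hn (q * (α - θ)) (q * (β - θ)) (c1 _ (by linarith)) (c2 _ (by linarith))
  have J2 := wgt_fin n hn (q * (α - η)) (q * (β - η)) (c1 _ (by linarith)) (c2 _ (by linarith))
  have J3 := wgt_fin n hn (p * θ) (p * η) d1 d2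
  set A1 := ∫⁻ x, ENNReal.ofReal (wgt n (q * (α - θ)) (q * (β - θ)) x) with hA1
  set A2 := ∫⁻ x, ENNReal.ofReal (wgt n (q * (α - η)) (q * (β - η)) x) with hA2
  set A3 := ∫⁻ x, ENNReal.ofReal (wgt n (p * θ) (p * η) x) with hA3
  have hpq0 : 0 ≤ p / q := by positivity
  set M : ℝ≥0∞ := ENNReal.ofReal (C ^ p) * (A1 ^ (p / q) + A2 ^ (p / q)) with hM
  have hMfin : M ≠ ∞ := ENNReal.mul_ne_top ENNReal.ofReal_ne_top
    (ENNReal.add_ne_top.2 ⟨ENNReal.rpow_ne_top_of_nonneg hpq0 J1,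
      ENNReal.rpow_ne_top_of_nonneg hpq0 J2⟩)
  have hfin : (M * A3) ^ (1 / p) ≠ ∞ :=
    ENNReal.rpow_ne_top_of_nonneg (by positivity) (ENNReal.mul_ne_top hMfin J3)
  refine ⟨((M * A3) ^ (1 / p)).toNNReal, fun k _ hk => ?_⟩
  rw [ENNReal.coe_toNNReal hfin]
  refine ENNReal.rpow_le_rpow ?_ (by positivity)
  rw [hA3, ← lintegral_const_mul' _ _ hMfin]
  refine lintegral_mono_ae ?_
  have hk' : ∀ᵐ y : EuclideanSpace ℝ (Fin n), ∀ᵐ x : EuclideanSpace ℝ (Fin n), y ≠ 0 →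
      ‖k (x + y, y)‖ ≤ C * min 1 (‖x‖ / ‖y‖) * ‖x‖ ^ (-α) *
              Real.sqrt (1 + ‖x‖ ^ 2) ^ (-(β - α)) := by
    have hsw := (Measure.measurePreserving_swap
      (μ := (volume : Measure (EuclideanSpace ℝ (Fin n))))
      (ν := (volume : Measure (EuclideanSpace ℝ (Fin n))))).quasiMeasurePreserving.ae hk
    exact Measure.ae_ae_of_ae_prod hsw
  have hne : ∀ᵐ x : EuclideanSpace ℝ (Fin n), x ≠ 0 := by
    simp [ae_iff]
  filter_upwards [hk', hne] with y hy hy0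
  have hy2 : ∀ᵐ x : EuclideanSpace ℝ (Fin n), ‖k (x + y, y)‖ ≤
      C * min 1 (‖x‖ / ‖y‖) * ‖x‖ ^ (-α) * Real.sqrt (1 + ‖x‖ ^ 2) ^ (-(β - α)) := by
    filter_upwards [hy] with x hx using hx hy0
  have hCp : 0 ≤ C ^ p := by positivity
  rcases le_or_gt ‖y‖ 1 with h | h
  · refine (inner_bd n hn p q α β C θ hp hq hC (by linarith) h1a.le (by linarith) k y hy0
      hy2).trans ?_
    rw [wgt, if_pos h, ENNReal.ofReal_mul hCp, hM, mul_right_comm]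
    gcongr
    exact le_self_add
  · refine (inner_bd n hn p q α β C η hp hq hC (by linarith) (by linarith) h4a.le k y hy0
      hy2).trans ?_
    rw [wgt, if_neg (not_le.2 h), ENNReal.ofReal_mul hCp, hM, mul_right_comm]
    gcongr
    exact le_add_self
end

section
/- Let m ≠ 0 be a real number and let η be a real number with 0 < |η| < 1/(2|m|). Then (1/(4π)) ∫_{ℝ²} (m + η|k|²) / (|k|² + (m − η|k|²)²)^{3/2} dk = (1/2)(sgn(m) + sgn(η)), where the integral is the Lebesgue integral over k = (k₁,k₂) ∈ ℝ² and |k|² = k₁² + k₂². -/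
open MeasureTheory

theorem chern_aux_D (m η : ℝ) (hm : m ≠ 0) (r : ℝ) : 0 < r ^ 2 + (m - η * r ^ 2) ^ 2 := by
  by_cases hr : r = 0
  · subst hr
    have := sq_pos_of_ne_zero hm
    simpa using this
  · have := sq_pos_of_ne_zero hr
    positivity

theorem chern_aux_deriv (m η : ℝ) (hm : m ≠ 0) (r : ℝ) :
    HasDerivAt (fun r : ℝ => -(m - η * r ^ 2) / Real.sqrt (r ^ 2 + (m - η * r ^ 2) ^ 2))
      (r * ((m + η * r ^ 2) / (r ^ 2 + (m - η * r ^ 2) ^ 2) ^ ((3 : ℝ) / 2))) r := by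
  have hD := chern_aux_D m η hm r
  have h2 : HasDerivAt (fun r : ℝ => r ^ 2) (2 * r) r := by
    simpa using hasDerivAt_pow 2 r
  have hu : HasDerivAt (fun r : ℝ => m - η * r ^ 2) (-(η * (2 * r))) r :=
    (h2.const_mul η).const_sub m
  have hDD := (h2.add (hu.pow 2)).sqrt hD.ne'
  have h := hu.neg.div hDD (Real.sqrt_pos.2 hD).ne'
  refine h.congr_deriv ?_
  have h32 : (r ^ 2 + (m - η * r ^ 2) ^ 2) ^ ((3 : ℝ) / 2)
      = Real.sqrt (r ^ 2 + (m - η * r ^ 2) ^ 2) ^ 3 := by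
    generalize r ^ 2 + (m - η * r ^ 2) ^ 2 = D at hD
    rw [Real.sqrt_eq_rpow, ← Real.rpow_natCast, ← Real.rpow_mul hD.le]
    norm_num
  rw [h32]
  simp only [Pi.add_apply, Pi.pow_apply]
  have hs := Real.sqrt_pos.2 hD
  have hsq := Real.sq_sqrt hD.le
  set s := Real.sqrt (r ^ 2 + (m - η * r ^ 2) ^ 2)
  field_simp
  rw [hsq]
  simp
  left
  ring

theorem chern_aux_lim (m η : ℝ) (hη : η ≠ 0) :
    Filter.Tendsto (fun r : ℝ => -(m - η * r ^ 2) / Real.sqrt (r ^ 2 + (m - η * r ^ 2) ^ 2))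
      Filter.atTop (nhds (Real.sign η)) := by
  have hc : ContinuousAt
      (fun t : ℝ => (η - m * t ^ 2) / Real.sqrt (t ^ 2 + (m * t ^ 2 - η) ^ 2)) 0 := by
    refine ContinuousAt.div (by fun_prop) (by fun_prop) ?_
    simp [Real.sqrt_sq_eq_abs, hη]
  have h := hc.tendsto.comp tendsto_inv_atTop_zero
  have e : Real.sign η = (η - m * (0:ℝ) ^ 2) / Real.sqrt ((0:ℝ) ^ 2 + (m * (0:ℝ) ^ 2 - η) ^ 2) := by
    simp [Real.sqrt_sq_eq_abs]
    rcases lt_or_gt_of_ne hη with h | h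
    · rw [Real.sign_of_neg h, abs_of_neg h]; field_simp
    · rw [Real.sign_of_pos h, abs_of_pos h]; field_simp
  rw [e]
  refine h.congr' ?_
  filter_upwards [Filter.eventually_gt_atTop 0] with r hr
  simp only [Function.comp]
  have e2 : r ^ 2 + (m - η * r ^ 2) ^ 2
      = (r ^ 2) ^ 2 * (r⁻¹ ^ 2 + (m * r⁻¹ ^ 2 - η) ^ 2) := by
    field_simp
  rw [e2, Real.sqrt_mul (by positivity), Real.sqrt_sq (by positivity)]
  have e3 : -(m - η * r ^ 2) = r ^ 2 * (η - m * r⁻¹ ^ 2) := by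
    field_simp
    ring
  rw [e3, mul_div_mul_left _ _ (by positivity)]

theorem chern_aux_int (m η : ℝ) (hm : m ≠ 0) (hη : η ≠ 0) :
    IntegrableOn (fun r : ℝ =>
      r * ((m + η * r ^ 2) / (r ^ 2 + (m - η * r ^ 2) ^ 2) ^ ((3 : ℝ) / 2))) (Set.Ioi 0) := by
  set a := Real.sqrt |m / η| with ha
  have ha0 : 0 ≤ a := Real.sqrt_nonneg _
  have haa : |η| * a ^ 2 = |m| := by
    rw [ha, Real.sq_sqrt (abs_nonneg _), abs_div]
    have := abs_pos.2 hη
    field_simp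
  rw [← Set.Ioc_union_Ioi_eq_Ioi ha0]
  refine IntegrableOn.union ?_ ?_
  · refine (Continuous.integrableOn_Icc ?_).mono_set Set.Ioc_subset_Icc_self
    refine continuous_id.mul (Continuous.div (by fun_prop) ?_ ?_)
    · exact Continuous.rpow_const (by fun_prop) fun x => Or.inr (by norm_num)
    · intro x
      exact (Real.rpow_pos_of_pos (chern_aux_D m η hm x) _).ne'
  · have key : ∀ x ∈ Set.Ioi a, |m| ≤ |η| * x ^ 2 := by
      intro x hx
      rw [← haa]
      have : a ≤ x := le_of_lt hx
      gcongr
    rcases lt_or_gt_of_ne hη with h | h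
    · refine integrableOn_Ioi_deriv_of_nonpos' (fun x _ => chern_aux_deriv m η hm x) ?_
        (chern_aux_lim m η hη)
      intro x hx
      have hk := key x hx
      rw [abs_of_neg h] at hk
      have hx0 : 0 ≤ x := ha0.trans (le_of_lt hx)
      refine mul_nonpos_of_nonneg_of_nonpos hx0 (div_nonpos_of_nonpos_of_nonneg ?_ ?_)
      · linarith [le_abs_self m]
      · exact (Real.rpow_pos_of_pos (chern_aux_D m η hm x) _).le
    · refine integrableOn_Ioi_deriv_of_nonneg' (fun x _ => chern_aux_deriv m η hm x) ?_
        (chern_aux_lim m η hη)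
      intro x hx
      have hk := key x hx
      rw [abs_of_pos h] at hk
      have hx0 : 0 ≤ x := ha0.trans (le_of_lt hx)
      refine mul_nonneg hx0 (div_nonneg ?_ ?_)
      · linarith [neg_abs_le m]
      · exact (Real.rpow_pos_of_pos (chern_aux_D m η hm x) _).le

/-- The Chern number integral of the regularized two-dimensional Dirac Hamiltonian:
`(1/(4π)) ∫_{ℝ²} (m + η|k|²)/(|k|² + (m − η|k|²)²)^{3/2} dk = (1/2)(sgn m + sgn η)`. -/
theorem chern_integral_two_dim (m η : ℝ) (hm : m ≠ 0)
    (hη : 0 < |η|) (hη' : |η| < 1 / (2 * |m|)) :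
    (1 / (4 * Real.pi)) *
      ∫ k : EuclideanSpace ℝ (Fin 2),
        (m + η * ‖k‖ ^ 2) / (‖k‖ ^ 2 + (m - η * ‖k‖ ^ 2) ^ 2) ^ ((3 : ℝ) / 2)
    = (1 / 2) * (Real.sign m + Real.sign η) := by
  have hη0 : η ≠ 0 := abs_pos.1 hη
  have h1 := integral_fun_norm_addHaar (volume : Measure (EuclideanSpace ℝ (Fin 2)))
    (fun r : ℝ => (m + η * r ^ 2) / (r ^ 2 + (m - η * r ^ 2) ^ 2) ^ ((3 : ℝ) / 2))
  have h2 := integral_Ioi_of_hasDerivAt_of_tendsto' (a := 0)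
    (fun x _ => chern_aux_deriv m η hm x) (chern_aux_int m η hm hη0) (chern_aux_lim m η hη0)
  have h3 : -(m - η * (0:ℝ) ^ 2) / Real.sqrt ((0:ℝ) ^ 2 + (m - η * (0:ℝ) ^ 2) ^ 2)
      = - Real.sign m := by
    simp [Real.sqrt_sq_eq_abs]
    rcases lt_or_gt_of_ne hm with h | h
    · rw [Real.sign_of_neg h, abs_of_neg h]; field_simp
    · rw [Real.sign_of_pos h, abs_of_pos h]; field_simp
  rw [h3] at h2
  have h4 : (volume : Measure (EuclideanSpace ℝ (Fin 2))).real (Metric.ball 0 1) = Real.pi := by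
    simp [Measure.real, EuclideanSpace.volume_ball_fin_two, Real.pi_nonneg]
  simp only [finrank_euclideanSpace, Fintype.card_fin, h4, smul_eq_mul, nsmul_eq_mul,
    Nat.add_one_sub_one, pow_one, Nat.reduceSub] at h1
  rw [h1, h2]
  have := Real.pi_pos
  push_cast
  field_simp
  ring
end

section
/- Let d ≥ 1 be an integer, and let m ≠ 0 and η ≠ 0 be real numbers. Then the function k ↦ (m + η|k|²)/(|k|² + (m − η|k|²)²)^{(d+1)/2} is Lebesgue integrable on ℝ^d and (1/A_d) ∫_{ℝ^d} (m + η|k|²) / (|k|² + (m − η|k|²)²)^{(d+1)/2} dk = (1/2)(sgn(m) + sgn(η)), where A_d = 2π^{(d+1)/2}/Γ((d+1)/2) is the volume of the unit sphere Sᵈ in ℝ^{d+1}. -/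
open MeasureTheory

open Filter Topology Set in
lemma J_integrable (d : ℕ) (hd : 1 ≤ d) :
    Integrable (fun t : ℝ => (1 + t ^ 2) ^ (-((d : ℝ) + 1) / 2)) := by
  have h1 : (1:ℝ) ≤ d := by exact_mod_cast hd
  have := integrable_rpow_neg_one_add_norm_sq (E := ℝ) (μ := volume) (r := (d : ℝ) + 1)
    (by simp; linarith)
  simpa using this

lemma F_deriv (d : ℕ) (t : ℝ) :
    HasDerivAt (fun t : ℝ => t * (1 + t ^ 2) ^ (-((d : ℝ) + 1) / 2))
      (-(d:ℝ) * (1 + t ^ 2) ^ (-((d : ℝ) + 1) / 2) +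
        ((d:ℝ) + 1) * (1 + t ^ 2) ^ (-(((d + 2 : ℕ) : ℝ) + 1) / 2)) t := by
  have hp : (0:ℝ) < 1 + t ^ 2 := by positivity
  have h1 : HasDerivAt (fun t : ℝ => 1 + t ^ 2) (2 * t) t := by
    simpa using (hasDerivAt_pow 2 t).const_add 1
  have h2 := (hasDerivAt_id t).mul (h1.rpow_const (p := -((d : ℝ) + 1) / 2) (Or.inl hp.ne'))
  refine h2.congr_deriv ?_
  have e1 : (-(((d + 2 : ℕ) : ℝ) + 1) / 2) = -((d : ℝ) + 1) / 2 - 1 := by push_cast; ring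
  have e2 : (1 + t ^ 2) ^ (-((d : ℝ) + 1) / 2) =
      (1 + t ^ 2) ^ (-((d : ℝ) + 1) / 2 - 1) * (1 + t ^ 2) := by
    rw [← Real.rpow_add_one hp.ne']; congr 1; ring
  rw [e1, e2]
  simp only [id]
  ring

open Filter Topology Set in
lemma F_tendsto (d : ℕ) (hd : 1 ≤ d) (l : Filter ℝ)
    (hl : Tendsto (fun t : ℝ => 1 + t ^ 2) l atTop) :
    Tendsto (fun t : ℝ => t * (1 + t ^ 2) ^ (-((d : ℝ) + 1) / 2)) l (𝓝 0) := by
  have h1 : (1:ℝ) ≤ d := by exact_mod_cast hd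
  have h := (tendsto_rpow_neg_atTop (y := (d:ℝ)/2) (by linarith)).comp hl
  refine squeeze_zero_norm (fun t => ?_) h
  have hp : (0:ℝ) < 1 + t ^ 2 := by positivity
  simp only [Function.comp]
  have e : (1 + t ^ 2) ^ (-((d:ℝ) / 2)) = (1 + t ^ 2) ^ (1/2:ℝ) * (1 + t ^ 2) ^ (-((d : ℝ) + 1) / 2) := by
    rw [← Real.rpow_add hp]; congr 1; ring
  rw [e, norm_mul, Real.norm_of_nonneg (Real.rpow_nonneg hp.le _)]
  gcongr
  rw [← Real.sqrt_eq_rpow, Real.norm_eq_abs]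
  apply Real.abs_le_sqrt; linarith

open Filter Topology Set in
lemma sq_top : Tendsto (fun t : ℝ => 1 + t ^ 2) atTop atTop :=
  tendsto_atTop_add_const_left _ _ (tendsto_pow_atTop two_ne_zero)

open Filter Topology Set in
lemma sq_bot : Tendsto (fun t : ℝ => 1 + t ^ 2) atBot atTop := by
  have := sq_top.comp tendsto_neg_atBot_atTop
  simpa [Function.comp_def] using this

lemma I_rec (d : ℕ) (hd : 1 ≤ d) :
    ((d:ℝ) + 1) * ∫ t : ℝ, (1 + t ^ 2) ^ (-(((d + 2 : ℕ) : ℝ) + 1) / 2)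
      = (d:ℝ) * ∫ t : ℝ, (1 + t ^ 2) ^ (-((d : ℝ) + 1) / 2) := by
  have i1 := (J_integrable d hd).const_mul (-(d:ℝ))
  have i2 := (J_integrable (d+2) (by omega)).const_mul ((d:ℝ) + 1)
  have h := integral_of_hasDerivAt_of_tendsto (F_deriv d) (i1.add i2)
    (F_tendsto d hd _ sq_bot) (F_tendsto d hd _ sq_top)
  rw [integral_add i1 i2, integral_const_mul, integral_const_mul] at h
  linarith

open Filter Topology Set in
lemma I_two : ∫ t : ℝ, (1 + t ^ 2) ^ (-(((2 : ℕ) : ℝ) + 1) / 2) = 2 := by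
  have key : Tendsto (fun t : ℝ => t * (1 + t ^ 2) ^ (-(((0:ℕ) : ℝ) + 1) / 2)) atTop (𝓝 1) := by
    have h1 : Tendsto (fun t : ℝ => Real.sqrt (1 - (1 + t ^ 2)⁻¹)) atTop (𝓝 1) := by
      have := ((tendsto_inv_atTop_zero.comp sq_top).const_sub 1).sqrt
      simpa [Function.comp_def] using this
    refine h1.congr' ?_
    filter_upwards [eventually_ge_atTop 0] with t ht
    have hp : (0:ℝ) < 1 + t ^ 2 := by positivity
    have : 1 - (1 + t ^ 2)⁻¹ = t ^ 2 / (1 + t ^ 2) := by field_simp; ring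
    rw [this, Real.sqrt_div (by positivity), Real.sqrt_sq ht, div_eq_mul_inv, Real.sqrt_eq_rpow,
      ← Real.rpow_neg hp.le]
    norm_num
  have key2 : Tendsto (fun t : ℝ => t * (1 + t ^ 2) ^ (-(((0:ℕ) : ℝ) + 1) / 2)) atBot (𝓝 (-1)) := by
    have := (key.comp tendsto_neg_atBot_atTop).neg
    simpa [Function.comp_def] using this
  have hi := J_integrable 2 (by norm_num)
  have h := integral_of_hasDerivAt_of_tendsto (F_deriv 0) (by simpa using hi) key2 key
  norm_num at h ⊢
  exact h

lemma I_val (d : ℕ) (hd : 1 ≤ d) :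
    (∫ t : ℝ, (1 + t ^ 2) ^ (-((d : ℝ) + 1) / 2)) * Real.Gamma (((d:ℝ) + 1) / 2)
      = Real.sqrt Real.pi * Real.Gamma ((d:ℝ) / 2) := by
  induction d using Nat.strong_induction_on with
  | _ d ih =>
    match d, hd with
    | 1, _ =>
      have : (∫ t : ℝ, (1 + t ^ 2) ^ (-(((1:ℕ) : ℝ) + 1) / 2)) = Real.pi := by
        rw [← integral_univ_inv_one_add_sq]
        congr 1; ext t
        rw [show (-(((1:ℕ) : ℝ) + 1) / 2) = -1 by norm_num, Real.rpow_neg_one]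
      rw [this]
      norm_num [Real.Gamma_one_half_eq]
      rw [Real.mul_self_sqrt Real.pi_pos.le]
    | 2, _ =>
      rw [I_two]
      have : Real.Gamma ((((2:ℕ):ℝ) + 1) / 2) = 1/2 * Real.sqrt Real.pi := by
        rw [show (((2:ℕ):ℝ) + 1) / 2 = 1/2 + 1 by norm_num, Real.Gamma_add_one (by norm_num),
          Real.Gamma_one_half_eq]
      rw [this]; norm_num; ring
    | (n + 3), _ =>
      have h := ih (n + 1) (by omega) (by omega)
      have r := I_rec (n + 1) (by omega)
      have g1 : Real.Gamma ((((n + 3 : ℕ):ℝ) + 1) / 2) =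
          ((((n + 1 : ℕ):ℝ) + 1) / 2) * Real.Gamma ((((n + 1 : ℕ):ℝ) + 1) / 2) := by
        rw [← Real.Gamma_add_one (by positivity)]; congr 1; push_cast; ring
      have g2 : Real.Gamma (((n + 3 : ℕ):ℝ) / 2) =
          (((n + 1 : ℕ):ℝ) / 2) * Real.Gamma (((n + 1 : ℕ):ℝ) / 2) := by
        rw [← Real.Gamma_add_one (by positivity)]; congr 1; push_cast; ring
      rw [g1, g2]
      change ((((n + 1 : ℕ):ℝ)) + 1) * (∫ t : ℝ, (1 + t ^ 2) ^ (-(((n + 3 : ℕ) : ℝ) + 1) / 2)) = _ at r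
      linear_combination (Real.Gamma ((((n + 1 : ℕ):ℝ) + 1) / 2)) / 2 * r +
        (((n + 1 : ℕ):ℝ) / 2) * h

open Filter Topology Set in
lemma Phi_top (d : ℕ) (hd : 1 ≤ d) :
    Tendsto (fun u : ℝ => ∫ t in (0:ℝ)..u, (1 + t ^ 2) ^ (-((d : ℝ) + 1) / 2)) atTop
      (𝓝 ((∫ t : ℝ, (1 + t ^ 2) ^ (-((d : ℝ) + 1) / 2)) / 2)) := by
  have hi := J_integrable d hd
  have h := (intervalIntegral_tendsto_integral hi tendsto_neg_atTop_atBot tendsto_id).div_const 2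
  refine h.congr fun u => ?_
  have a := intervalIntegral.integral_add_adjacent_intervals (a := -u) (b := 0) (c := u)
    hi.intervalIntegrable hi.intervalIntegrable
  have b := intervalIntegral.integral_comp_neg (a := 0) (b := u)
    (fun t : ℝ => (1 + t ^ 2) ^ (-((d : ℝ) + 1) / 2))
  simp only [neg_zero, even_two.neg_pow] at b
  simp only [id]
  linarith

open Filter Topology Set in
lemma Phi_bot (d : ℕ) (hd : 1 ≤ d) :
    Tendsto (fun u : ℝ => ∫ t in (0:ℝ)..u, (1 + t ^ 2) ^ (-((d : ℝ) + 1) / 2)) atBot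
      (𝓝 (-((∫ t : ℝ, (1 + t ^ 2) ^ (-((d : ℝ) + 1) / 2)) / 2))) := by
  have h := ((Phi_top d hd).comp tendsto_neg_atBot_atTop).neg
  refine h.congr fun u => ?_
  have b := intervalIntegral.integral_comp_neg (a := 0) (b := -u)
    (fun t : ℝ => (1 + t ^ 2) ^ (-((d : ℝ) + 1) / 2))
  simp only [neg_zero, neg_neg, even_two.neg_pow] at b
  simp only [Function.comp]
  rw [b, intervalIntegral.integral_symm, neg_neg]

lemma Phi_deriv (d : ℕ) (u : ℝ) :
    HasDerivAt (fun u : ℝ => ∫ t in (0:ℝ)..u, (1 + t ^ 2) ^ (-((d : ℝ) + 1) / 2))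
      ((1 + u ^ 2) ^ (-((d : ℝ) + 1) / 2)) u := by
  have hc : Continuous (fun t : ℝ => (1 + t ^ 2) ^ (-((d : ℝ) + 1) / 2)) :=
    Continuous.rpow_const (by fun_prop) (fun t => Or.inl (by positivity))
  exact (hc.integral_hasStrictDerivAt 0 u).hasDerivAt

lemma integrand_eq (d : ℕ) (hd : 1 ≤ d) (m η r : ℝ) (hr : 0 < r) :
    r ^ (d - 1) * ((m + η * r ^ 2) / (r ^ 2 + (m - η * r ^ 2) ^ 2) ^ (((d : ℝ) + 1) / 2))
      = (1 + (η * r - m / r) ^ 2) ^ (-((d : ℝ) + 1) / 2) * (η + m / r ^ 2) := by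
  obtain ⟨n, rfl⟩ : ∃ n, d = n + 1 := ⟨d - 1, by omega⟩
  have hp : (0:ℝ) < 1 + (η * r - m / r) ^ 2 := by positivity
  have e : r ^ 2 + (m - η * r ^ 2) ^ 2 = r ^ 2 * (1 + (η * r - m / r) ^ 2) := by
    field_simp; ring
  have e2 : (r ^ 2) ^ ((((n + 1 : ℕ) : ℝ) + 1) / 2) = r ^ (n + 2) := by
    rw [← Real.rpow_natCast, ← Real.rpow_mul hr.le, ← Real.rpow_natCast]
    congr 1; push_cast; ring
  rw [e, Real.mul_rpow (by positivity) hp.le, e2, neg_div, Real.rpow_neg hp.le]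
  have : (0:ℝ) < (1 + (η * r - m / r) ^ 2) ^ ((((n + 1 : ℕ) : ℝ) + 1) / 2) := by positivity
  generalize (1 + (η * r - m / r) ^ 2) ^ ((((n + 1 : ℕ) : ℝ) + 1) / 2) = X at *
  simp only [Nat.add_sub_cancel]
  field_simp
  ring

lemma G_deriv (d : ℕ) (hd : 1 ≤ d) (m η r : ℝ) (hr : 0 < r) :
    HasDerivAt (fun r : ℝ => ∫ t in (0:ℝ)..(η * r - m / r), (1 + t ^ 2) ^ (-((d : ℝ) + 1) / 2))
      (r ^ (d - 1) * ((m + η * r ^ 2) / (r ^ 2 + (m - η * r ^ 2) ^ 2) ^ (((d : ℝ) + 1) / 2))) r := by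
  rw [integrand_eq d hd m η r hr]
  have hu : HasDerivAt (fun r : ℝ => η * r - m / r) (η + m / r ^ 2) r := by
    have := ((hasDerivAt_id r).const_mul η).sub ((hasDerivAt_inv hr.ne').const_mul m)
    refine this.congr_deriv ?_
    field_simp
    ring
  exact (Phi_deriv d _).comp r hu

open Filter Topology Set in
lemma G_top (d : ℕ) (hd : 1 ≤ d) (m η : ℝ) (hη : η ≠ 0) :
    Tendsto (fun r : ℝ => ∫ t in (0:ℝ)..(η * r - m / r), (1 + t ^ 2) ^ (-((d : ℝ) + 1) / 2))
      atTop (𝓝 (Real.sign η * ((∫ t : ℝ, (1 + t ^ 2) ^ (-((d : ℝ) + 1) / 2)) / 2))) := by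
  have h0 : Tendsto (fun r : ℝ => -(m / r)) atTop (𝓝 (-0)) :=
    (tendsto_id.const_div_atTop m).neg
  simp only [sub_eq_add_neg]
  rcases lt_or_gt_of_ne hη with h | h
  · rw [Real.sign_of_neg h, neg_one_mul]
    exact (Phi_bot d hd).comp ((tendsto_id.const_mul_atTop_of_neg h).atBot_add h0)
  · rw [Real.sign_of_pos h, one_mul]
    exact (Phi_top d hd).comp ((tendsto_id.const_mul_atTop h).atTop_add h0)

open Filter Topology Set in
lemma G_zero (d : ℕ) (hd : 1 ≤ d) (m η : ℝ) (hm : m ≠ 0) :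
    Tendsto (fun r : ℝ => ∫ t in (0:ℝ)..(η * r - m / r), (1 + t ^ 2) ^ (-((d : ℝ) + 1) / 2))
      (𝓝[>] 0) (𝓝 (-(Real.sign m * ((∫ t : ℝ, (1 + t ^ 2) ^ (-((d : ℝ) + 1) / 2)) / 2)))) := by
  have h0 : Tendsto (fun r : ℝ => η * r) (𝓝[>] 0) (𝓝 (η * 0)) :=
    ((continuous_const_mul η).tendsto 0).mono_left nhdsWithin_le_nhds
  have e : ∀ r : ℝ, η * r - m / r = η * r + (-m) * r⁻¹ := fun r => by ring
  simp only [e]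
  rcases lt_or_gt_of_ne hm with h | h
  · rw [Real.sign_of_neg h, neg_one_mul, neg_neg]
    exact (Phi_top d hd).comp
      (h0.add_atTop (tendsto_inv_nhdsGT_zero.const_mul_atTop (by linarith)))
  · rw [Real.sign_of_pos h, one_mul]
    exact (Phi_bot d hd).comp
      (h0.add_atBot (tendsto_inv_nhdsGT_zero.const_mul_atTop_of_neg (by linarith)))

open Filter Topology Set in
lemma radial_integrable (d : ℕ) (hd : 1 ≤ d) (m η : ℝ) (hm : m ≠ 0) (hη : η ≠ 0) :
    IntegrableOn (fun r : ℝ => r ^ (d - 1) *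
      ((m + η * r ^ 2) / (r ^ 2 + (m - η * r ^ 2) ^ 2) ^ (((d : ℝ) + 1) / 2))) (Ioi 0) := by
  set R : ℝ := 1 + |m| / |η| with hR
  have hη' : 0 < |η| := abs_pos.2 hη
  have hR1 : 1 ≤ R := by rw [hR]; linarith [show 0 ≤ |m| / |η| by positivity]
  have hmR : ∀ r ∈ Ioi R, |m| ≤ |η| * r ^ 2 := by
    intro r hr
    have hr : R < r := hr
    have : |m| / |η| ≤ r ^ 2 := by nlinarith
    rwa [div_le_iff₀ hη', mul_comm] at this
  have hpos : ∀ r : ℝ, 0 < r ^ 2 + (m - η * r ^ 2) ^ 2 := by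
    intro r
    rcases eq_or_ne r 0 with rfl | h
    · simp; positivity
    · positivity
  rw [← Ioc_union_Ioi_eq_Ioi (show (0:ℝ) ≤ R by linarith)]
  refine IntegrableOn.union ?_ ?_
  · refine (Continuous.integrableOn_Icc (a := 0) (b := R) ?_).mono_set Ioc_subset_Icc_self
    refine (by fun_prop : Continuous fun r : ℝ => r ^ (d - 1)).mul (Continuous.div (by fun_prop) ?_ ?_)
    · exact Continuous.rpow_const (by fun_prop) (fun t => Or.inl (hpos t).ne')
    · exact fun r => (Real.rpow_pos_of_pos (hpos r) _).ne'
  · have hd' : ∀ r ∈ Ici R, HasDerivAt _ _ r := fun r hr =>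
      G_deriv d hd m η r (by have : R ≤ r := hr; linarith)
    rcases lt_or_gt_of_ne hη with h | h
    · refine integrableOn_Ioi_deriv_of_nonpos' hd' (fun r hr => ?_) (G_top d hd m η hη)
      have hr0 : 0 < r := by have : R < r := hr; linarith
      have := hmR r hr
      rw [abs_of_neg h] at this
      exact mul_nonpos_of_nonneg_of_nonpos (by positivity)
        (div_nonpos_of_nonpos_of_nonneg (by linarith [le_abs_self m])
          (Real.rpow_nonneg (hpos r).le _))
    · refine integrableOn_Ioi_deriv_of_nonneg' hd' (fun r hr => ?_) (G_top d hd m η hη)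
      have hr0 : 0 < r := by have : R < r := hr; linarith
      have := hmR r hr
      rw [abs_of_pos h] at this
      exact mul_nonneg (by positivity)
        (div_nonneg (by linarith [neg_abs_le m])
          (Real.rpow_nonneg (hpos r).le _))

open Filter Topology Set in
lemma radial_integral (d : ℕ) (hd : 1 ≤ d) (m η : ℝ) (hm : m ≠ 0) (hη : η ≠ 0) :
    ∫ r in Ioi (0:ℝ), r ^ (d - 1) *
      ((m + η * r ^ 2) / (r ^ 2 + (m - η * r ^ 2) ^ 2) ^ (((d : ℝ) + 1) / 2))
    = (Real.sign m + Real.sign η) * ((∫ t : ℝ, (1 + t ^ 2) ^ (-((d : ℝ) + 1) / 2)) / 2) := by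
  set G : ℝ → ℝ := fun r => ∫ t in (0:ℝ)..(η * r - m / r), (1 + t ^ 2) ^ (-((d : ℝ) + 1) / 2) with hG
  set c : ℝ := -(Real.sign m * ((∫ t : ℝ, (1 + t ^ 2) ^ (-((d : ℝ) + 1) / 2)) / 2)) with hc
  have := integral_Ioi_of_hasDerivAt_of_tendsto (f := Function.update G 0 c) (a := 0)
    (f' := fun r : ℝ => r ^ (d - 1) *
      ((m + η * r ^ 2) / (r ^ 2 + (m - η * r ^ 2) ^ 2) ^ (((d : ℝ) + 1) / 2)))
    (m := Real.sign η * ((∫ t : ℝ, (1 + t ^ 2) ^ (-((d : ℝ) + 1) / 2)) / 2)) ?_ ?_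
    (radial_integrable d hd m η hm hη) ?_
  · rw [this, Function.update_self, hc]; ring
  · rw [continuousWithinAt_update_same, Ici_sdiff_left]
    exact G_zero d hd m η hm
  · intro r hr
    have hr : 0 < r := hr
    refine (G_deriv d hd m η r hr).congr_of_eventuallyEq ?_
    filter_upwards [eventually_ne_nhds hr.ne'] with x hx
    simp [hx, hG]
  · refine (G_top d hd m η hη).congr' ?_
    filter_upwards [eventually_ne_atTop 0] with x hx
    simp [hx, hG]

theorem degree_integral_dim_d (d : ℕ) (hd : 1 ≤ d) (m η : ℝ) (hm : m ≠ 0) (hη : η ≠ 0) :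
    Integrable (fun k : EuclideanSpace ℝ (Fin d) =>
      (m + η * ‖k‖ ^ 2) / (‖k‖ ^ 2 + (m - η * ‖k‖ ^ 2) ^ 2) ^ (((d : ℝ) + 1) / 2)) ∧
    (1 / (2 * Real.pi ^ (((d : ℝ) + 1) / 2) / Real.Gamma (((d : ℝ) + 1) / 2))) *
      ∫ k : EuclideanSpace ℝ (Fin d),
        (m + η * ‖k‖ ^ 2) / (‖k‖ ^ 2 + (m - η * ‖k‖ ^ 2) ^ 2) ^ (((d : ℝ) + 1) / 2)
    = (1 / 2) * (Real.sign m + Real.sign η) := by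
  have : Nonempty (Fin d) := ⟨⟨0, hd⟩⟩
  have hd0 : (0:ℝ) < d := by exact_mod_cast hd
  let f : ℝ → ℝ := fun r => (m + η * r ^ 2) / (r ^ 2 + (m - η * r ^ 2) ^ 2) ^ (((d : ℝ) + 1) / 2)
  constructor
  · refine (integrable_fun_norm_addHaar (E := EuclideanSpace ℝ (Fin d)) volume (f := f)).2 ?_
    simpa [f] using radial_integrable d hd m η hm hη
  · have h := integral_fun_norm_addHaar (E := EuclideanSpace ℝ (Fin d)) volume f
    simp only [f, finrank_euclideanSpace, Fintype.card_fin, smul_eq_mul, nsmul_eq_mul,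
      radial_integral d hd m η hm hη] at h
    rw [h]
    have hv : (volume : Measure (EuclideanSpace ℝ (Fin d))).real (Metric.ball 0 1)
        = Real.sqrt Real.pi ^ d / Real.Gamma ((d:ℝ) / 2 + 1) := by
      have hg : 0 < Real.Gamma ((d:ℝ) / 2 + 1) := Real.Gamma_pos_of_pos (by positivity)
      rw [Measure.real, EuclideanSpace.volume_ball]
      simp only [ENNReal.ofReal_one, one_pow, one_mul, Fintype.card_fin]
      exact ENNReal.toReal_ofReal (by positivity)
    have hI := I_val d hd
    have hp : Real.pi ^ (((d : ℝ) + 1) / 2) = Real.sqrt Real.pi ^ d * Real.sqrt Real.pi := by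
      rw [← pow_succ, ← Real.rpow_natCast, Real.sqrt_eq_rpow, ← Real.rpow_mul Real.pi_pos.le]
      congr 1; push_cast; ring
    rw [hv, hp, Real.Gamma_add_one (by positivity)]
    have g1 : 0 < Real.Gamma ((d:ℝ) / 2) := Real.Gamma_pos_of_pos (by positivity)
    have g2 : 0 < Real.Gamma (((d:ℝ) + 1) / 2) := Real.Gamma_pos_of_pos (by positivity)
    have hs : 0 < Real.sqrt Real.pi := Real.sqrt_pos.2 Real.pi_pos
    generalize (∫ t : ℝ, (1 + t ^ 2) ^ (-((d : ℝ) + 1) / 2)) = I at *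
    have hI' : I = Real.sqrt Real.pi * Real.Gamma ((d:ℝ) / 2) / Real.Gamma (((d:ℝ) + 1) / 2) := by
      rw [eq_div_iff g2.ne', hI]
    rw [hI']
    generalize Real.Gamma ((d:ℝ) / 2) = A at *
    generalize Real.Gamma (((d:ℝ) + 1) / 2) = B at *
    generalize Real.sqrt Real.pi = s at *
    field_simp
end

section
/- Let m ≠ 0 be a real number. Then (1/(4π)) ∫_{ℝ²} m / (|k|² + m²)^{3/2} dk = (1/2) sgn(m), where the integral is the Lebesgue integral over k ∈ ℝ² and |k|² = k₁² + k₂². In particular this value is not an integer, so the unregularized (η = 0) Chern number of the Dirac projector is a half-integer. -/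
open MeasureTheory

lemma chern_radial (m : ℝ) (hm : m ≠ 0) :
    ∫ y in Set.Ioi (0:ℝ), y * (m / (y ^ 2 + m ^ 2) ^ ((3 : ℝ) / 2)) = Real.sign m := by
  have hpos : ∀ y : ℝ, 0 < y ^ 2 + m ^ 2 := fun y => by positivity
  have hd : ∀ y ∈ Set.Ici (0:ℝ), HasDerivAt (fun y : ℝ => -(y ^ 2 + m ^ 2) ^ (-(1 : ℝ) / 2))
      (y * (1 / (y ^ 2 + m ^ 2) ^ ((3 : ℝ) / 2))) y := by
    intro y _
    have h1 : HasDerivAt (fun y : ℝ => y ^ 2 + m ^ 2) (2 * y) y := by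
      simpa using (hasDerivAt_pow 2 y).add_const (m ^ 2)
    have h2 := (h1.rpow_const (p := -(1 : ℝ) / 2) (Or.inl (hpos y).ne')).neg
    refine h2.congr_deriv ?_
    rw [show (-(1:ℝ) / 2 - 1) = -(3 / 2) by norm_num, Real.rpow_neg (hpos y).le]
    ring
  have ht : Filter.Tendsto (fun y : ℝ => -(y ^ 2 + m ^ 2) ^ (-(1 : ℝ) / 2)) Filter.atTop
      (nhds 0) := by
    have h := (tendsto_rpow_neg_atTop (y := (1:ℝ)/2) (by norm_num)).comp
      (Filter.tendsto_atTop_add_const_right _ (m ^ 2)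
        (Filter.tendsto_pow_atTop (α := ℝ) (n := 2) (by norm_num)))
    have := h.neg
    simpa [Function.comp_def, neg_div] using this
  have hi := integral_Ioi_of_hasDerivAt_of_nonneg' hd
    (fun y hy => by have := hpos y; have : (0:ℝ) < y := hy; positivity) ht
  have : ∀ y : ℝ, y * (m / (y ^ 2 + m ^ 2) ^ ((3 : ℝ) / 2))
      = m * (y * (1 / (y ^ 2 + m ^ 2) ^ ((3 : ℝ) / 2))) := fun y => by ring
  simp_rw [this]
  rw [integral_const_mul, hi]
  have e : (0 ^ 2 + m ^ 2) ^ (-(1 : ℝ) / 2) = |m|⁻¹ := by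
    rw [neg_div, Real.rpow_neg (hpos 0).le, ← Real.sqrt_eq_rpow]
    simp [Real.sqrt_sq_eq_abs]
  rw [e]
  rcases lt_or_gt_of_ne hm with h | h
  · rw [Real.sign_of_neg h, abs_of_neg h]; field_simp; norm_num
  · rw [Real.sign_of_pos h, abs_of_pos h]; field_simp; norm_num

lemma chern_value (m : ℝ) (hm : m ≠ 0) :
    (1 / (4 * Real.pi)) *
      ∫ k : EuclideanSpace ℝ (Fin 2), m / (‖k‖ ^ 2 + m ^ 2) ^ ((3 : ℝ) / 2)
    = (1 / 2) * Real.sign m := by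
  have h := integral_fun_norm_addHaar (volume : Measure (EuclideanSpace ℝ (Fin 2)))
    (fun r : ℝ => m / (r ^ 2 + m ^ 2) ^ ((3 : ℝ) / 2))
  rw [h]
  have hb : (volume : Measure (EuclideanSpace ℝ (Fin 2))).real (Metric.ball 0 1) = Real.pi := by
    simp [Measure.real, EuclideanSpace.volume_ball_fin_two, Real.pi_pos.le]
  have := chern_radial m hm
  simp only [finrank_euclideanSpace_fin, Nat.add_one_sub_one, pow_one, smul_eq_mul, nsmul_eq_mul,
    hb, this, Nat.cast_ofNat]
  have := Real.pi_pos.ne'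
  field_simp
  norm_num



/-- The unregularized (η = 0) Chern number of the two-dimensional Dirac projector:
`(1/(4π)) ∫_{ℝ²} m/(|k|² + m²)^{3/2} dk = (1/2) sgn(m)`, a half-integer, hence not an
integer. -/
theorem chern_integral_unregularized (m : ℝ) (hm : m ≠ 0) :
    (1 / (4 * Real.pi)) *
      ∫ k : EuclideanSpace ℝ (Fin 2), m / (‖k‖ ^ 2 + m ^ 2) ^ ((3 : ℝ) / 2)
    = (1 / 2) * Real.sign m ∧
    ¬ ∃ z : ℤ, (1 / (4 * Real.pi)) *
      ∫ k : EuclideanSpace ℝ (Fin 2), m / (‖k‖ ^ 2 + m ^ 2) ^ ((3 : ℝ) / 2) = (z : ℝ) := by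
  refine ⟨chern_value m hm, ?_⟩
  rw [chern_value m hm]
  rintro ⟨z, hz⟩
  rcases lt_or_gt_of_ne hm with h | h
  · rw [Real.sign_of_neg h] at hz
    have h2 : ((2 * z : ℤ) : ℝ) = ((-1 : ℤ) : ℝ) := by push_cast; linarith
    have := Int.cast_injective h2
    omega
  · rw [Real.sign_of_pos h] at hz
    have h2 : ((2 * z : ℤ) : ℝ) = ((1 : ℤ) : ℝ) := by push_cast; linarith
    have := Int.cast_injective h2
    omega
end

section
/- Let U ⊆ ℝ^d be open, k₀ ∈ U, and let H : U → M_N(ℂ) take Hermitian values and be differentiable at k₀, and let e : U → ℝ be positive and differentiable at k₀, with H(k)² = e(k)²·I_N for all k ∈ U. Define P : U → M_N(ℂ) by P(k) = (1/2)I_N − H(k)/(2e(k)). Then P is differentiable at k₀ and for every direction j ∈ {1,…,d} the commutator identity [P(k₀), ∂_j P(k₀)] = (1/(4e(k₀)²))·[H(k₀), ∂_j H(k₀)] holds, where ∂_j denotes the partial derivative in the j-th coordinate and [A,B] = AB − BA. -/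
open Matrix

attribute [local instance] Matrix.normedAddCommGroup Matrix.normedSpace

/-- If `H(k)² = e(k)²·I` with `H` Hermitian-valued and `e > 0` on an open set `U ∋ k₀`,
both differentiable at `k₀`, then the Fermi projector `P = (1/2)I − H/(2e)` is
differentiable at `k₀` and `[P, ∂ⱼP] = (1/(4e²))[H, ∂ⱼH]` at `k₀`. -/
theorem fermi_projector_commutator (d N : ℕ)
    (U : Set (EuclideanSpace ℝ (Fin d))) (hU : IsOpen U)
    (k₀ : EuclideanSpace ℝ (Fin d)) (hk₀ : k₀ ∈ U)
    (H : EuclideanSpace ℝ (Fin d) → Matrix (Fin N) (Fin N) ℂ)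
    (e : EuclideanSpace ℝ (Fin d) → ℝ)
    (hHerm : ∀ k ∈ U, (H k).IsHermitian)
    (hHdiff : DifferentiableAt ℝ H k₀)
    (hepos : ∀ k ∈ U, 0 < e k)
    (hediff : DifferentiableAt ℝ e k₀)
    (hsq : ∀ k ∈ U, H k * H k = (e k ^ 2) • (1 : Matrix (Fin N) (Fin N) ℂ)) :
    let P : EuclideanSpace ℝ (Fin d) → Matrix (Fin N) (Fin N) ℂ :=
      fun k => ((1 : ℝ) / 2) • (1 : Matrix (Fin N) (Fin N) ℂ) - (1 / (2 * e k)) • H k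
    DifferentiableAt ℝ P k₀ ∧
    ∀ j : Fin d,
      P k₀ * fderiv ℝ P k₀ (EuclideanSpace.single j 1)
          - fderiv ℝ P k₀ (EuclideanSpace.single j 1) * P k₀
        = (1 / (4 * e k₀ ^ 2)) •
            (H k₀ * fderiv ℝ H k₀ (EuclideanSpace.single j 1)
              - fderiv ℝ H k₀ (EuclideanSpace.single j 1) * H k₀) := by
  intro P
  have he : e k₀ ≠ 0 := (hepos k₀ hk₀).ne'
  have hc : DifferentiableAt ℝ (fun k => 1 / (2 * e k)) k₀ := by
    have h2 : DifferentiableAt ℝ (fun k => 2 * e k) k₀ := hediff.const_mul 2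
    simp only [one_div]
    exact h2.fun_inv (mul_ne_zero two_ne_zero he)
  have hP : HasFDerivAt P _ k₀ :=
    (hc.hasFDerivAt.smul hHdiff.hasFDerivAt).const_sub
      (((1 : ℝ) / 2) • (1 : Matrix (Fin N) (Fin N) ℂ))
  refine ⟨hP.differentiableAt, fun j => ?_⟩
  have hD : fderiv ℝ P k₀ (EuclideanSpace.single j 1) =
      -((1 / (2 * e k₀)) • fderiv ℝ H k₀ (EuclideanSpace.single j 1) +
        fderiv ℝ (fun k => 1 / (2 * e k)) k₀ (EuclideanSpace.single j 1) • H k₀) := by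
    rw [hP.fderiv]; rfl
  rw [hD]
  simp only [P]
  generalize fderiv ℝ H k₀ (EuclideanSpace.single j 1) = D
  generalize fderiv ℝ (fun k => 1 / (2 * e k)) k₀ (EuclideanSpace.single j 1) = c
  have h4 : 1 / (4 * e k₀ ^ 2) = (1 / (2 * e k₀)) * (1 / (2 * e k₀)) := by
    field_simp; norm_num
  rw [h4]
  generalize 1 / (2 * e k₀) = a
  simp only [sub_mul, mul_sub, mul_neg, neg_mul, mul_add, add_mul, smul_mul_assoc,
    mul_smul_comm, one_mul, mul_one, smul_sub, smul_add, smul_neg, smul_smul]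
  module
end

section
/- Let d = 2κ be even and let γ_d¹, …, γ_d^{d+1} be the Dirac matrices of size 2^κ given by the recursive construction. Let h : ℝ^d → ℝ^{d+1} be nonvanishing and differentiable at a point k, and define P(k') = (1/2)I − (1/(2|h(k')|)) Σ_{j=1}^{d+1} h_j(k') γ_d^j for k' near k. Let L(k) be the (d+1)×(d+1) real matrix whose first row is h(k) and whose (j+1)-th row is the partial derivative ∂h/∂k_j(k), 1 ≤ j ≤ d. Then Σ_{ρ ∈ S_d} sgn(ρ) · trace( P(k) · ∂_{ρ(1)}P(k) · ⋯ · ∂_{ρ(d)}P(k) ) = −((2i)^{d/2} · d! / 2^{d+1}) · det(L(k)) / |h(k)|^{d+1}, where S_d is the symmetric group on d letters and ∂_j denotes the partial derivative in the j-th coordinate. -/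
open Matrix

/-- Pauli matrix σ₁. -/
noncomputable def pauli1 : Matrix (Fin 2) (Fin 2) ℂ := !![0, 1; 1, 0]

/-- Pauli matrix σ₂. -/
noncomputable def pauli2 : Matrix (Fin 2) (Fin 2) ℂ := !![0, -Complex.I; Complex.I, 0]

/-- Pauli matrix σ₃. -/
noncomputable def pauli3 : Matrix (Fin 2) (Fin 2) ℂ := !![1, 0; 0, -1]

/-- Re-index a square matrix along an equality of dimensions. -/
noncomputable def castSq {m n : ℕ} (h : m = n) (A : Matrix (Fin m) (Fin m) ℂ) :
    Matrix (Fin n) (Fin n) ℂ :=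
  Matrix.reindex (finCongr h) (finCongr h) A

/-- Kronecker product of a 2×2 matrix with an n×n matrix, with indices flattened. -/
noncomputable def kron2 {n : ℕ} (A : Matrix (Fin 2) (Fin 2) ℂ) (B : Matrix (Fin n) (Fin n) ℂ) :
    Matrix (Fin (2 * n)) (Fin (2 * n)) ℂ :=
  Matrix.reindex finProdFinEquiv finProdFinEquiv (Matrix.kroneckerMap (· * ·) A B)

/-- The recursively constructed Dirac matrices: `diracGamma κ j` is the `j`-th Dirac matrix
(1-indexed, `1 ≤ j ≤ 2κ+1`) of size `2^κ`. For κ = 1 these are the Pauli matrices; the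
recursion is `γ_{d+2}^j = σ₁ ⊗ γ_d^j` (`1 ≤ j ≤ d+1`), `γ_{d+2}^{d+2} = σ₂ ⊗ I`,
`γ_{d+2}^{d+3} = σ₃ ⊗ I` for `d = 2κ`. -/
noncomputable def diracGamma : (κ : ℕ) → ℕ → Matrix (Fin (2 ^ κ)) (Fin (2 ^ κ)) ℂ
  | 0, _ => 1
  | 1, j => castSq (by norm_num)
      (if j = 1 then pauli1 else if j = 2 then pauli2 else if j = 3 then pauli3 else 1)
  | (κ + 2), j => castSq (by rw [pow_succ]; ring)
      (if j ≤ 2 * (κ + 1) + 1 then kron2 pauli1 (diracGamma (κ + 1) j)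
       else if j = 2 * (κ + 1) + 2 then kron2 pauli2 1
       else if j = 2 * (κ + 1) + 3 then kron2 pauli3 1
       else 1)

attribute [local instance] Matrix.normedAddCommGroup Matrix.normedSpace


theorem aux_swap {R : Type*} [Ring R] : ∀ (n : ℕ) (i : Fin n) (g : Fin (n + 1) → R),
    g i.castSucc * g i.succ = - (g i.succ * g i.castSucc) →
    (List.ofFn (fun j => g (Equiv.swap i.castSucc i.succ j))).prod = - (List.ofFn g).prod := by
  intro n
  induction n with
  | zero => intro i; exact i.elim0
  | succ n ih =>
    intro i
    refine Fin.cases ?_ (fun i => ?_) i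
    · intro g hg
      have hz : ∀ x : Fin n, Equiv.swap (0 : Fin (n+2)) 1 x.succ.succ = x.succ.succ := by
        intro x
        apply Equiv.swap_apply_of_ne_of_ne
        · exact Fin.succ_ne_zero _
        · intro h
          have := congrArg Fin.val h
          simp at this
      simp only [Fin.castSucc_zero, Fin.succ_zero_eq_one] at hg ⊢
      rw [List.ofFn_succ, List.ofFn_succ, List.ofFn_succ, List.ofFn_succ]
      simp only [List.prod_cons, hz, Equiv.swap_apply_left, Fin.succ_zero_eq_one,
        Equiv.swap_apply_right]
      rw [← mul_assoc, ← mul_assoc, hg]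
      noncomm_ring
    · intro g hg
      have h1 : ∀ x : Fin (n+1), Equiv.swap i.succ.castSucc i.succ.succ x.succ
          = (Equiv.swap i.castSucc i.succ x).succ := by
        intro x
        rw [Fin.castSucc_succ]
        exact ((Fin.succ_injective _).map_swap _ _ _).symm
      have h0 : Equiv.swap i.succ.castSucc i.succ.succ 0 = 0 := by
        apply Equiv.swap_apply_of_ne_of_ne
        · rw [Fin.castSucc_succ]; exact (Fin.succ_ne_zero _).symm
        · exact (Fin.succ_ne_zero _).symm
      rw [List.ofFn_succ, List.ofFn_succ (f := g)]
      simp only [List.prod_cons, h0, h1]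
      rw [ih i (fun x => g x.succ) (by simpa using hg)]
      simp

theorem aux_perm {R : Type*} [Ring R] (n : ℕ) (g : Fin (n + 1) → R)
    (hg : ∀ i j, i ≠ j → g i * g j = - (g j * g i)) (σ : Equiv.Perm (Fin (n + 1))) :
    (List.ofFn (fun j => g (σ j))).prod = ((Equiv.Perm.sign σ : ℤ) : R) * (List.ofFn g).prod := by
  have hσ : σ ∈ Submonoid.closure
      (Set.range fun i : Fin n ↦ Equiv.swap i.castSucc i.succ) := by
    rw [Equiv.Perm.mclosure_swap_castSucc_succ]; trivial
  induction hσ using Submonoid.closure_induction_right with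
  | one => simp
  | mul_right σ _ y hy ih =>
    obtain ⟨i, rfl⟩ := hy
    have hne : i.castSucc ≠ i.succ := (Fin.castSucc_lt_succ (i := i)).ne
    have := aux_swap n i (fun j => g (σ j)) (hg _ _ (fun h => hne (σ.injective h)))
    simp only [Equiv.Perm.mul_apply]
    rw [this, ih]
    simp [Equiv.Perm.sign_swap hne]

/-- cyclicity: antisymmetrised trace of an even number of factors vanishes -/
theorem aux_cyc {N : Type*} [Fintype N] [DecidableEq N] (m : ℕ) (hm : Odd m)
    (D : Fin (m + 1) → Matrix N N ℂ) :
    ∑ ρ : Equiv.Perm (Fin (m + 1)), ((Equiv.Perm.sign ρ : ℤ) : ℂ) *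
      Matrix.trace (List.ofFn fun i => D (ρ i)).prod = 0 := by
  have key : ∀ v : Fin (m+1) → Matrix N N ℂ,
      Matrix.trace (List.ofFn fun i => v (finRotate (m+1) i)).prod
        = Matrix.trace (List.ofFn v).prod := by
    intro v
    have : (fun i => v (finRotate (m+1) i)) = Fin.snoc (α := fun _ => Matrix N N ℂ)
        (fun i => v i.succ) (v 0) := by
      rw [Fin.snoc_eq_cons_rotate]
      funext i
      rw [show (fun i : Fin m => v i.succ) = Fin.tail v from rfl, Fin.cons_self_tail]
    rw [this, List.ofFn_succ', List.ofFn_succ]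
    simp only [Fin.snoc_castSucc, Fin.snoc_last, List.concat_eq_append, List.prod_append,
      List.prod_cons, List.prod_nil, mul_one]
    rw [Matrix.trace_mul_comm]
  set S := ∑ ρ : Equiv.Perm (Fin (m + 1)), ((Equiv.Perm.sign ρ : ℤ) : ℂ) *
      Matrix.trace (List.ofFn fun i => D (ρ i)).prod with hS
  have h2 : S = -S := by
    conv_lhs => rw [hS]
    rw [← Equiv.sum_comp (Equiv.mulRight (finRotate (m+1))), hS, ← Finset.sum_neg_distrib]
    refine Finset.sum_congr rfl fun ρ _ => ?_
    have := key (fun i => D (ρ i))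
    simp only [Equiv.coe_mulRight, Equiv.Perm.mul_apply] at this ⊢
    rw [this]
    simp [sign_finRotate, hm.neg_one_pow]
  linear_combination h2 / 2

theorem castSq_mul {m n : ℕ} (h : m = n) (A B : Matrix (Fin m) (Fin m) ℂ) :
    castSq h (A * B) = castSq h A * castSq h B := by
  subst h; rfl

theorem castSq_one {m n : ℕ} (h : m = n) : castSq h 1 = 1 := by
  subst h; simp [castSq]

theorem castSq_neg {m n : ℕ} (h : m = n) (A : Matrix (Fin m) (Fin m) ℂ) :
    castSq h (-A) = - castSq h A := by
  subst h; rfl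

theorem castSq_smul {m n : ℕ} (h : m = n) (c : ℂ) (A : Matrix (Fin m) (Fin m) ℂ) :
    castSq h (c • A) = c • castSq h A := by
  subst h; rfl

theorem kron2_mul {n : ℕ} (A C : Matrix (Fin 2) (Fin 2) ℂ) (B D : Matrix (Fin n) (Fin n) ℂ) :
    kron2 A B * kron2 C D = kron2 (A * C) (B * D) := by
  unfold kron2
  have := Matrix.mul_kronecker_mul A C B D
  rw [this]
  simp [Matrix.reindex_apply, Matrix.submatrix_mul_equiv]

theorem kron2_one {n : ℕ} : kron2 1 (1 : Matrix (Fin n) (Fin n) ℂ) = 1 := by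
  unfold kron2
  have := Matrix.one_kronecker_one (α := ℂ) (m := Fin 2) (n := Fin n)
  rw [this]
  simp

theorem kron2_smul_left {n : ℕ} (c : ℂ) (A : Matrix (Fin 2) (Fin 2) ℂ)
    (B : Matrix (Fin n) (Fin n) ℂ) : kron2 (c • A) B = c • kron2 A B := by
  ext i j
  simp [kron2, mul_assoc]

theorem kron2_smul_right {n : ℕ} (c : ℂ) (A : Matrix (Fin 2) (Fin 2) ℂ)
    (B : Matrix (Fin n) (Fin n) ℂ) : kron2 A (c • B) = c • kron2 A B := by
  ext i j
  simp [kron2]; ring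

theorem kron2_neg_left {n : ℕ} (A : Matrix (Fin 2) (Fin 2) ℂ)
    (B : Matrix (Fin n) (Fin n) ℂ) : kron2 (-A) B = - kron2 A B := by
  ext i j
  simp [kron2]

theorem kron2_neg_right {n : ℕ} (A : Matrix (Fin 2) (Fin 2) ℂ)
    (B : Matrix (Fin n) (Fin n) ℂ) : kron2 A (-B) = - kron2 A B := by
  ext i j
  simp [kron2]

theorem p11 : pauli1 * pauli1 = 1 := by
  ext i j; fin_cases i <;> fin_cases j <;> simp [pauli1]
theorem p22 : pauli2 * pauli2 = 1 := by
  ext i j; fin_cases i <;> fin_cases j <;> simp [pauli2]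
theorem p33 : pauli3 * pauli3 = 1 := by
  ext i j; fin_cases i <;> fin_cases j <;> simp [pauli3]
theorem p12 : pauli1 * pauli2 = -(pauli2 * pauli1) := by
  ext i j; fin_cases i <;> fin_cases j <;> simp [pauli1, pauli2]
theorem p13 : pauli1 * pauli3 = -(pauli3 * pauli1) := by
  ext i j; fin_cases i <;> fin_cases j <;> simp [pauli1, pauli3]
theorem p23 : pauli2 * pauli3 = -(pauli3 * pauli2) := by
  ext i j; fin_cases i <;> fin_cases j <;> simp [pauli2, pauli3]
theorem p123 : pauli1 * (pauli2 * pauli3) = Complex.I • (1 : Matrix (Fin 2) (Fin 2) ℂ) := by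
  ext i j; fin_cases i <;> fin_cases j <;> simp [pauli1, pauli2, pauli3]

theorem gam_one (j : ℕ) : diracGamma 1 j = castSq (by norm_num)
      (if j = 1 then pauli1 else if j = 2 then pauli2 else if j = 3 then pauli3 else 1) := by
  rw [diracGamma]

theorem gam_lo (κ j : ℕ) (h : j ≤ 2 * (κ + 1) + 1) : diracGamma (κ + 2) j =
    castSq (by rw [pow_succ]; ring) (kron2 pauli1 (diracGamma (κ + 1) j)) := by
  rw [diracGamma, if_pos h]

theorem gam_m (κ : ℕ) : diracGamma (κ + 2) (2 * (κ + 1) + 2) =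
    castSq (by rw [pow_succ]; ring) (kron2 pauli2 (1 : Matrix (Fin (2^(κ+1))) _ ℂ)) := by
  rw [diracGamma, if_neg (by omega), if_pos rfl]

theorem gam_h (κ : ℕ) : diracGamma (κ + 2) (2 * (κ + 1) + 3) =
    castSq (by rw [pow_succ]; ring) (kron2 pauli3 (1 : Matrix (Fin (2^(κ+1))) _ ℂ)) := by
  rw [diracGamma, if_neg (by omega), if_neg (by omega), if_pos rfl]

theorem gam_sq (κ : ℕ) : ∀ j, 1 ≤ j → j ≤ 2 * (κ + 1) + 1 →
    diracGamma (κ + 1) j * diracGamma (κ + 1) j = 1 := by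
  induction κ with
  | zero =>
    intro j h1 h2
    change diracGamma 1 j * diracGamma 1 j = 1
    simp only [gam_one, ← castSq_mul]
    obtain rfl | rfl | rfl : j = 1 ∨ j = 2 ∨ j = 3 := by omega
    all_goals simp [p11, p22, p33, castSq_one]
  | succ κ ih =>
    intro j h1 h2
    obtain h | rfl | rfl : j ≤ 2 * (κ + 1) + 1 ∨ j = 2 * (κ + 1) + 2 ∨ j = 2 * (κ + 1) + 3 := by
      omega
    · rw [gam_lo _ _ h, ← castSq_mul, kron2_mul, ih j h1 h, p11, kron2_one, castSq_one]
    · rw [gam_m, ← castSq_mul, kron2_mul, p22, mul_one, kron2_one, castSq_one]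
    · rw [gam_h, ← castSq_mul, kron2_mul, p33, mul_one, kron2_one, castSq_one]

theorem gam_anti_lt (κ : ℕ) : ∀ i j, 1 ≤ i → i < j → j ≤ 2 * (κ + 1) + 1 →
    diracGamma (κ + 1) i * diracGamma (κ + 1) j
      = -(diracGamma (κ + 1) j * diracGamma (κ + 1) i) := by
  induction κ with
  | zero =>
    intro i j h1 h2 h3
    change diracGamma 1 i * diracGamma 1 j = -(diracGamma 1 j * diracGamma 1 i)
    simp only [gam_one, ← castSq_mul, ← castSq_neg]
    obtain ⟨rfl, rfl⟩ | ⟨rfl, rfl⟩ | ⟨rfl, rfl⟩ :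
      (i = 1 ∧ j = 2) ∨ (i = 1 ∧ j = 3) ∨ (i = 2 ∧ j = 3) := by omega
    all_goals simp [p12, p13, p23]
  | succ κ ih =>
    intro i j h1 h2 h3
    obtain h | rfl | rfl : j ≤ 2 * (κ + 1) + 1 ∨ j = 2 * (κ + 1) + 2 ∨ j = 2 * (κ + 1) + 3 := by
      omega
    · rw [gam_lo _ _ h, gam_lo _ i (by omega), ← castSq_mul, ← castSq_mul, kron2_mul, kron2_mul,
        ih i j h1 h2 h, kron2_neg_right, castSq_neg]
    · rw [gam_m, gam_lo _ i (by omega), ← castSq_mul, ← castSq_mul, kron2_mul, kron2_mul,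
        p12, kron2_neg_left, castSq_neg, mul_one, one_mul]
    · obtain h | rfl : i ≤ 2 * (κ + 1) + 1 ∨ i = 2 * (κ + 1) + 2 := by omega
      · rw [gam_h, gam_lo _ i h, ← castSq_mul, ← castSq_mul, kron2_mul, kron2_mul,
          p13, kron2_neg_left, castSq_neg, mul_one, one_mul]
      · rw [gam_h, gam_m, ← castSq_mul, ← castSq_mul, kron2_mul, kron2_mul,
          p23, kron2_neg_left, castSq_neg]

theorem gam_anti (κ : ℕ) (i j : Fin (2 * (κ + 1) + 1)) (h : i ≠ j) :
    diracGamma (κ + 1) (i + 1) * diracGamma (κ + 1) (j + 1)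
      = -(diracGamma (κ + 1) (j + 1) * diracGamma (κ + 1) (i + 1)) := by
  obtain h | h := lt_or_gt_of_ne h
  · exact gam_anti_lt κ _ _ (by omega) (by have : i.val < j.val := h; omega) (by omega)
  · rw [gam_anti_lt κ (j + 1) (i + 1) (by omega) (by have : j.val < i.val := h; omega) (by omega),
      neg_neg]

theorem gam_prod_lo (κ n : ℕ) (hn : n ≤ 2 * (κ + 1) + 1) :
    ((List.range n).map fun j => diracGamma (κ + 2) (j + 1)).prod =
    castSq (by rw [pow_succ]; ring) (kron2 (pauli1 ^ n)
      ((List.range n).map fun j => diracGamma (κ + 1) (j + 1)).prod) := by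
  induction n with
  | zero => simp [kron2_one, castSq_one]
  | succ n ih =>
    simp only [List.range_succ, List.map_append, List.prod_append, List.map_cons, List.map_nil,
      List.prod_cons, List.prod_nil, mul_one]
    rw [ih (by omega), gam_lo _ _ (by omega), ← castSq_mul, kron2_mul, pow_succ pauli1]

theorem gam_prod (κ : ℕ) :
    ((List.range (2 * (κ + 1) + 1)).map fun j => diracGamma (κ + 1) (j + 1)).prod =
      Complex.I ^ (κ + 1) • 1 := by
  induction κ with
  | zero =>
    simp [List.range_succ, gam_one, ← castSq_mul, mul_assoc, p123, castSq_smul, castSq_one]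
  | succ κ ih =>
    rw [show 2 * (κ + 1 + 1) + 1 = 2 * (κ + 1) + 1 + 1 + 1 by ring, List.range_succ,
      List.range_succ]
    simp only [List.map_append, List.prod_append, List.map_cons, List.map_nil,
      List.prod_cons, List.prod_nil, mul_one]
    rw [gam_prod_lo _ _ le_rfl, ih, gam_m, gam_h, ← castSq_mul, ← castSq_mul, kron2_mul, kron2_mul]
    have : pauli1 ^ (2 * (κ + 1) + 1) = pauli1 := by
      rw [pow_succ, pow_mul, pow_two, p11, one_pow, one_mul]
    rw [this, mul_assoc, p123, mul_one, mul_one, kron2_smul_left, kron2_smul_right, kron2_one,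
      castSq_smul, castSq_smul, castSq_one, smul_smul, ← pow_succ']


theorem aux_conj {R : Type*} [Ring R] (g : R) (l : List R)
    (hl : ∀ x ∈ l, g * x = -(x * g)) : g * l.prod = (-1) ^ l.length * (l.prod * g) := by
  induction l with
  | nil => simp
  | cons a l ih =>
    have h1 := hl a (by simp)
    have h2 := ih (fun x hx => hl x (by simp [hx]))
    rw [List.prod_cons, ← mul_assoc, h1, neg_mul, mul_assoc, h2, List.length_cons, pow_succ]
    have hc : Commute a ((-1 : R) ^ l.length) :=
      ((Commute.one_right a).neg_right).pow_right _
    rw [← mul_assoc a, hc.eq]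
    simp only [mul_assoc, mul_neg, neg_mul, one_mul, mul_one]

/-- `γ f(0) ⋯ γ f(n)` has zero trace if `f` misses a value -/
theorem trace_miss (κ : ℕ) (f : Fin (2 * (κ + 1) + 1) → Fin (2 * (κ + 1) + 1))
    (hf : ¬ Function.Surjective f) :
    Matrix.trace (List.ofFn fun i => diracGamma (κ + 1) ((f i : ℕ) + 1)).prod = 0 := by
  unfold Function.Surjective at hf
  push Not at hf
  obtain ⟨m, hm⟩ := hf
  set l := List.ofFn fun i => diracGamma (κ + 1) ((f i : ℕ) + 1) with hl
  have h1 := aux_conj (diracGamma (κ + 1) ((m : ℕ) + 1)) l (by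
    intro x hx
    rw [hl, List.mem_ofFn'] at hx
    obtain ⟨i, rfl⟩ := hx
    exact gam_anti κ m (f i) (hm i).symm)
  have hlen : l.length = 2 * (κ + 1) + 1 := by rw [hl, List.length_ofFn]
  rw [hlen, Odd.neg_one_pow ⟨κ + 1, rfl⟩] at h1
  have hsq := gam_sq κ ((m : ℕ) + 1) (by omega) (by omega)
  have h2 : Matrix.trace (diracGamma (κ + 1) ((m : ℕ) + 1) * l.prod *
      diracGamma (κ + 1) ((m : ℕ) + 1)) = Matrix.trace l.prod := by
    rw [Matrix.trace_mul_comm, ← mul_assoc, hsq, one_mul]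
  rw [h1, mul_assoc, mul_assoc, hsq, mul_one, neg_one_mul, Matrix.trace_neg] at h2
  linear_combination (-1 / 2 : ℂ) * h2

theorem trace_perm (κ : ℕ) (σ : Equiv.Perm (Fin (2 * (κ + 1) + 1))) :
    Matrix.trace (List.ofFn fun i => diracGamma (κ + 1) ((σ i : ℕ) + 1)).prod =
      ((Equiv.Perm.sign σ : ℤ) : ℂ) * (2 * Complex.I) ^ (κ + 1) := by
  rw [aux_perm _ (fun j : Fin (2 * (κ + 1) + 1) => diracGamma (κ + 1) ((j : ℕ) + 1))
    (gam_anti κ) σ]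
  have : List.ofFn (fun j : Fin (2 * (κ + 1) + 1) => diracGamma (κ + 1) ((j : ℕ) + 1)) =
      (List.range (2 * (κ + 1) + 1)).map fun j => diracGamma (κ + 1) (j + 1) := by
    rw [List.ofFn_eq_map, ← List.map_coe_finRange_eq_range, List.map_map]; rfl
  rw [this, gam_prod]
  rw [← zsmul_eq_mul, Matrix.trace_smul, Matrix.trace_smul, Matrix.trace_one, zsmul_eq_mul]
  simp [mul_pow]
  ring_nf

/-- Clifford slash -/
noncomputable def slash (κ : ℕ) : (Fin (2 * (κ + 1) + 1) → ℂ) →ₗ[ℂ]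
    Matrix (Fin (2 ^ (κ + 1))) (Fin (2 ^ (κ + 1))) ℂ :=
  Fintype.linearCombination ℂ (fun j : Fin (2 * (κ + 1) + 1) => diracGamma (κ + 1) ((j : ℕ) + 1))

theorem slash_apply (κ : ℕ) (v : Fin (2 * (κ + 1) + 1) → ℂ) :
    slash κ v = ∑ j, v j • diracGamma (κ + 1) ((j : ℕ) + 1) := by
  simp [slash, Fintype.linearCombination_apply]

theorem slash_single (κ : ℕ) (j : Fin (2 * (κ + 1) + 1)) :
    slash κ (Pi.single j 1) = diracGamma (κ + 1) ((j : ℕ) + 1) := by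
  simp [slash]

noncomputable def trMul (κ : ℕ) : MultilinearMap ℂ
    (fun _ : Fin (2 * (κ + 1) + 1) => Fin (2 * (κ + 1) + 1) → ℂ) ℂ :=
  (Matrix.traceLinearMap (Fin (2 ^ (κ + 1))) ℂ ℂ).compMultilinearMap
    ((MultilinearMap.mkPiAlgebraFin ℂ (2 * (κ + 1) + 1)
      (Matrix (Fin (2 ^ (κ + 1))) (Fin (2 ^ (κ + 1))) ℂ)).compLinearMap fun _ => slash κ)

theorem trMul_apply (κ : ℕ) (v : Fin (2 * (κ + 1) + 1) → Fin (2 * (κ + 1) + 1) → ℂ) :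
    trMul κ v = Matrix.trace (List.ofFn fun i => slash κ (v i)).prod := by
  simp [trMul]

theorem key_det (κ : ℕ) (v : Fin (2 * (κ + 1) + 1) → Fin (2 * (κ + 1) + 1) → ℂ) :
    ∑ ρ : Equiv.Perm (Fin (2 * (κ + 1))), ((Equiv.Perm.sign ρ : ℤ) : ℂ) *
      trMul κ (fun i => v (Equiv.Perm.decomposeFin.symm (0, ρ) i)) =
      (2 * Complex.I) ^ (κ + 1) * (Nat.factorial (2 * (κ + 1)) : ℂ) * Matrix.det (Matrix.of v) := by
  have hext : (∑ ρ : Equiv.Perm (Fin (2 * (κ + 1))), ((Equiv.Perm.sign ρ : ℤ) : ℂ) •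
      (trMul κ).domDomCongr (Equiv.Perm.decomposeFin.symm (0, ρ))) =
      ((2 * Complex.I) ^ (κ + 1) * (Nat.factorial (2 * (κ + 1)) : ℂ)) •
      (Matrix.detRowAlternating (R := ℂ) (n := Fin (2 * (κ + 1) + 1))).toMultilinearMap := by
    refine Module.Basis.ext_multilinear (fun _ => Pi.basisFun ℂ _) fun f => ?_
    simp only [MultilinearMap.sum_apply, MultilinearMap.smul_apply, MultilinearMap.domDomCongr_apply,
      trMul_apply, Pi.basisFun_apply, slash_single, smul_eq_mul, AlternatingMap.coe_multilinearMap]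
    by_cases hf : Function.Surjective f
    · have hb : Function.Bijective f := Finite.injective_iff_bijective.mp
        (Finite.injective_iff_surjective.mpr hf)
      obtain ⟨σ, rfl⟩ : ∃ σ : Equiv.Perm (Fin (2 * (κ + 1) + 1)), f = σ :=
        ⟨Equiv.ofBijective f hb, rfl⟩
      have hdet : Matrix.detRowAlternating (R := ℂ)
          (fun i => (Pi.single (σ i) (1 : ℂ) : Fin (2 * (κ + 1) + 1) → ℂ))
          = ((Equiv.Perm.sign σ : ℤ) : ℂ) := by
        have h1 := Matrix.det_permutation (R := ℂ) σ
        rw [← h1]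
        congr 1
        ext i j
        simp [Equiv.toPEquiv_apply, PEquiv.toMatrix_apply, Pi.single_apply, eq_comm]
      rw [hdet]
      have : ∀ ρ : Equiv.Perm (Fin (2 * (κ + 1))), ((Equiv.Perm.sign ρ : ℤ) : ℂ) *
          Matrix.trace (List.ofFn fun i => diracGamma (κ + 1)
            ((σ (Equiv.Perm.decomposeFin.symm (0, ρ) i) : ℕ) + 1)).prod =
          ((Equiv.Perm.sign σ : ℤ) : ℂ) * (2 * Complex.I) ^ (κ + 1) := by
        intro ρ
        have := trace_perm κ (σ * Equiv.Perm.decomposeFin.symm (0, ρ))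
        simp only [Equiv.Perm.mul_apply] at this
        rw [this, map_mul, Equiv.Perm.decomposeFin.symm_sign]
        have hs : ((Equiv.Perm.sign ρ : ℤ) : ℂ) * ((Equiv.Perm.sign ρ : ℤ) : ℂ) = 1 := by
          rw [← Int.cast_mul, Int.units_coe_mul_self, Int.cast_one]
        simp only [if_true, one_mul, Units.val_mul, Int.cast_mul]
        linear_combination ((Equiv.Perm.sign σ : ℤ) : ℂ) * (2 * Complex.I) ^ (κ + 1) * hs
      rw [Finset.sum_congr rfl (fun ρ _ => this ρ), Finset.sum_const, Finset.card_univ,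
        Fintype.card_perm, Fintype.card_fin, nsmul_eq_mul]
      ring
    · have hz : ∀ ρ : Equiv.Perm (Fin (2 * (κ + 1))), Matrix.trace (List.ofFn fun i =>
          diracGamma (κ + 1) ((f (Equiv.Perm.decomposeFin.symm (0, ρ) i) : ℕ) + 1)).prod = 0 := by
        intro ρ
        refine trace_miss κ (fun i => f (Equiv.Perm.decomposeFin.symm (0, ρ) i)) fun hs => hf ?_
        exact Function.Surjective.of_comp hs
      simp only [hz, mul_zero, Finset.sum_const_zero]
      have hni : ¬ Function.Injective f := fun h => hf (Finite.injective_iff_surjective.mp h)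
      rw [AlternatingMap.map_eq_zero_of_not_injective, mul_zero]
      intro hi
      exact hni fun a b hab => hi (by simp [hab])
  have := congrArg (fun F => F v) hext
  simp only [MultilinearMap.sum_apply, MultilinearMap.smul_apply, MultilinearMap.domDomCongr_apply,
    smul_eq_mul, AlternatingMap.coe_multilinearMap] at this
  exact this

theorem algebra_main (κ : ℕ) (v : Fin (2 * (κ + 1) + 1) → Fin (2 * (κ + 1) + 1) → ℂ) :
    ∑ ρ : Equiv.Perm (Fin (2 * (κ + 1))), ((Equiv.Perm.sign ρ : ℤ) : ℂ) *
      Matrix.trace ((((1 : ℂ) / 2) • (1 : Matrix (Fin (2 ^ (κ + 1))) (Fin (2 ^ (κ + 1))) ℂ)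
        + slash κ (v 0)) * (List.ofFn fun i => slash κ (v (ρ i).succ)).prod) =
      (2 * Complex.I) ^ (κ + 1) * (Nat.factorial (2 * (κ + 1)) : ℂ) * Matrix.det (Matrix.of v) := by
  rw [← key_det]
  have h0 := aux_cyc (2 * κ + 1) ⟨κ, rfl⟩ (fun i => slash κ (v i.succ))
  have h1 : ∀ ρ : Equiv.Perm (Fin (2 * (κ + 1))),
      trMul κ (fun i => v (Equiv.Perm.decomposeFin.symm (0, ρ) i)) =
      Matrix.trace (slash κ (v 0) * (List.ofFn fun i => slash κ (v (ρ i).succ)).prod) := by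
    intro ρ
    rw [trMul_apply, List.ofFn_succ, List.prod_cons]
    simp
  simp only [h1, add_mul, Matrix.trace_add, mul_add, Finset.sum_add_distrib]
  rw [add_eq_right]
  simp only [smul_mul_assoc, one_mul, Matrix.trace_smul, smul_eq_mul]
  have h2 := congrArg (fun z => (1 / 2 : ℂ) * z) h0
  simp only [mul_zero, Finset.mul_sum] at h2
  rw [← h2]
  refine Finset.sum_congr rfl fun ρ _ => ?_
  ring_nf
  rfl

theorem slash_real_hasFDeriv {E : Type*} [NormedAddCommGroup E] [NormedSpace ℝ E] (κ : ℕ)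
    (u : E → EuclideanSpace ℝ (Fin (2 * (κ + 1) + 1))) (k : E) (hu : DifferentiableAt ℝ u k)
    (A : Matrix (Fin (2 ^ (κ + 1))) (Fin (2 ^ (κ + 1))) ℂ) (e : E) :
    fderiv ℝ (fun k' => A - ∑ j, ((u k' j : ℝ) : ℂ) • diracGamma (κ + 1) ((j : ℕ) + 1)) k e =
      slash κ (fun j => -((fderiv ℝ u k e j : ℝ) : ℂ)) := by
  let T : EuclideanSpace ℝ (Fin (2 * (κ + 1) + 1)) →ₗ[ℝ]
      Matrix (Fin (2 ^ (κ + 1))) (Fin (2 ^ (κ + 1))) ℂ :=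
    { toFun := fun x => ∑ j, ((x j : ℝ) : ℂ) • diracGamma (κ + 1) ((j : ℕ) + 1)
      map_add' := by
        intro x y; simp [add_smul, Finset.sum_add_distrib]
      map_smul' := by
        intro c x; simp [Finset.smul_sum, mul_smul] }
  have hT : HasFDerivAt (fun k' => A - LinearMap.toContinuousLinearMap T (u k'))
      (-((LinearMap.toContinuousLinearMap T).comp (fderiv ℝ u k))) k :=
    ((LinearMap.toContinuousLinearMap T).hasFDerivAt.comp k hu.hasFDerivAt).const_sub A
  have := hT.fderiv
  have h2 : (fun k' => A - ∑ j, ((u k' j : ℝ) : ℂ) • diracGamma (κ + 1) ((j : ℕ) + 1)) =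
    (fun k' => A - LinearMap.toContinuousLinearMap T (u k')) := rfl
  rw [h2, this, slash_apply]
  simp [T]

/-- Even-dimensional geometric identity for the Fermi projector of `H(k) = h(k)·Γ`:
`Σ_ρ sgn(ρ) tr(P ∂_{ρ(1)}P ⋯ ∂_{ρ(d)}P) = −((2i)^{d/2} d!/2^{d+1}) det(L)/|h|^{d+1}`
where `L` has first row `h(k)` and remaining rows `∂h/∂k_j(k)`. -/
theorem projector_trace_degree_even (κ : ℕ) (hκ : 1 ≤ κ)
    (h : EuclideanSpace ℝ (Fin (2 * κ)) → EuclideanSpace ℝ (Fin (2 * κ + 1)))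
    (k : EuclideanSpace ℝ (Fin (2 * κ)))
    (hne : ∀ x, h x ≠ 0)
    (hdiff : DifferentiableAt ℝ h k) :
    let P : EuclideanSpace ℝ (Fin (2 * κ)) → Matrix (Fin (2 ^ κ)) (Fin (2 ^ κ)) ℂ :=
      fun k' => ((1 : ℂ) / 2) • (1 : Matrix (Fin (2 ^ κ)) (Fin (2 ^ κ)) ℂ) -
        ∑ j : Fin (2 * κ + 1), ((h k' j / (2 * ‖h k'‖) : ℝ) : ℂ) • diracGamma κ ((j : ℕ) + 1)
    let pdP : Fin (2 * κ) → Matrix (Fin (2 ^ κ)) (Fin (2 ^ κ)) ℂ :=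
      fun j => fderiv ℝ P k (EuclideanSpace.single j 1)
    let L : Matrix (Fin (2 * κ + 1)) (Fin (2 * κ + 1)) ℝ :=
      Matrix.of (Fin.cons (fun l => h k l)
        (fun (j : Fin (2 * κ)) (l : Fin (2 * κ + 1)) =>
          fderiv ℝ h k (EuclideanSpace.single j 1) l))
    ∑ ρ : Equiv.Perm (Fin (2 * κ)), ((Equiv.Perm.sign ρ : ℤ) : ℂ) *
        Matrix.trace (P k * (List.ofFn fun i : Fin (2 * κ) => pdP (ρ i)).prod)
      = -((2 * Complex.I) ^ κ * (Nat.factorial (2 * κ) : ℂ) / 2 ^ (2 * κ + 1)) *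
          ((L.det : ℝ) : ℂ) / ((‖h k‖ : ℝ) : ℂ) ^ (2 * κ + 1) := by
  obtain ⟨κ, rfl⟩ : ∃ m, κ = m + 1 := ⟨κ - 1, by omega⟩
  intro P pdP L
  have hn : ‖h k‖ ≠ 0 := norm_ne_zero_iff.mpr (hne k)
  set c : EuclideanSpace ℝ (Fin (2 * (κ + 1))) → ℝ := fun x => (2 * ‖h x‖)⁻¹ with hc
  have hcd : DifferentiableAt ℝ c k :=
    ((hdiff.norm ℝ (hne k)).const_mul 2).inv (mul_ne_zero two_ne_zero hn)
  set u : EuclideanSpace ℝ (Fin (2 * (κ + 1))) → EuclideanSpace ℝ (Fin (2 * (κ + 1) + 1)) :=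
    fun x => c x • h x with hu
  have hud : DifferentiableAt ℝ u k := hcd.smul hdiff
  have huval : ∀ x j, u x j = h x j / (2 * ‖h x‖) := by
    intro x j
    simp [hu, hc, div_eq_inv_mul]
  have hP : P = fun k' => ((1 : ℂ) / 2) • (1 : Matrix (Fin (2 ^ (κ + 1))) (Fin (2 ^ (κ + 1))) ℂ) -
      ∑ j, ((u k' j : ℝ) : ℂ) • diracGamma (κ + 1) ((j : ℕ) + 1) := by
    funext k'
    simp only [P, huval]
  let w : Fin (2 * (κ + 1) + 1) → Fin (2 * (κ + 1) + 1) → ℝ :=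
    Fin.cons (fun l => u k l) (fun j l => fderiv ℝ u k (EuclideanSpace.single j 1) l)
  let v : Fin (2 * (κ + 1) + 1) → Fin (2 * (κ + 1) + 1) → ℂ := fun i l => -((w i l : ℝ) : ℂ)
  have hpd : ∀ j, pdP j = slash κ (v j.succ) := by
    intro j
    simp only [pdP, hP]
    rw [slash_real_hasFDeriv κ u k hud]
    rfl
  have hP0 : P k = ((1 : ℂ) / 2) • (1 : Matrix (Fin (2 ^ (κ + 1))) (Fin (2 ^ (κ + 1))) ℂ) +
      slash κ (v 0) := by
    rw [hP, slash_apply]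
    simp [v, w, sub_eq_add_neg]
  have hdet : Matrix.det (Matrix.of w) = (c k) ^ (2 * (κ + 1) + 1) * L.det := by
    have h1 : Matrix.det (Matrix.of w) = Matrix.det (c k • L) := by
      refine Matrix.det_eq_of_forall_row_eq_smul_add_const
        (Fin.cons 0 (fun j => fderiv ℝ c k (EuclideanSpace.single j 1) / c k)) 0 rfl ?_
      intro i l
      have hck : c k ≠ 0 := inv_ne_zero (mul_ne_zero two_ne_zero hn)
      refine Fin.cases ?_ (fun j => ?_) i
      · simp [w, L, hu]
      · have : fderiv ℝ u k = c k • fderiv ℝ h k + (fderiv ℝ c k).smulRight (h k) :=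
          fderiv_fun_smul hcd hdiff
        simp [w, L, this]
        field_simp
    rw [h1, Matrix.det_smul, Fintype.card_fin]
  have hdetv : Matrix.det (Matrix.of v) = -((Matrix.det (Matrix.of w) : ℝ) : ℂ) := by
    have h1 : Matrix.of v = -((Matrix.of w).map (Complex.ofRealHom)) := by
      ext i l; simp [v]
    rw [h1, Matrix.det_neg, Fintype.card_fin, Odd.neg_one_pow ⟨κ + 1, rfl⟩, neg_one_mul]
    congr 1
    exact (RingHom.map_det Complex.ofRealHom (Matrix.of w)).symm
  simp only [hpd, hP0]
  rw [algebra_main, hdetv, hdet]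
  have hnc : ((‖h k‖ : ℝ) : ℂ) ≠ 0 := by exact_mod_cast hn
  simp only [hc]
  push_cast
  rw [inv_pow, mul_pow (2 : ℂ) ((‖h k‖ : ℝ) : ℂ)]
  field_simp
end

section
/- Let g : ℝ → [0, ∞) be measurable, and let χ denote the indicator function of (0, ∞). Then ∫_{ℝ²} (χ(y) − χ(y'))² · g(y − y') dy dy' = ∫_ℝ |z| · g(z) dz, where both sides are Lebesgue integrals (possibly infinite). -/
open MeasureTheory

/-- For a nonnegative measurable `g` and `χ` the indicator of `(0, ∞)`:
`∫_{ℝ²} (χ(y) − χ(y'))² g(y − y') dy dy' = ∫_ℝ |z| g(z) dz` (as Lebesgue integrals,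
possibly infinite). -/
theorem indicator_difference_integral (g : ℝ → ℝ) (hg : Measurable g) (hg0 : ∀ y, 0 ≤ g y) :
    ∫⁻ p : ℝ × ℝ, ENNReal.ofReal
        (((if 0 < p.1 then (1 : ℝ) else 0) - (if 0 < p.2 then (1 : ℝ) else 0)) ^ 2
          * g (p.1 - p.2))
      = ∫⁻ z : ℝ, ENNReal.ofReal (|z| * g z) := by
  have hm : Measurable (fun p : ℝ × ℝ => ENNReal.ofReal
        (((if 0 < p.1 then (1 : ℝ) else 0) - (if 0 < p.2 then (1 : ℝ) else 0)) ^ 2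
          * g (p.1 - p.2))) := by
    refine ENNReal.measurable_ofReal.comp (Measurable.mul (Measurable.pow_const
      (Measurable.sub ?_ ?_) 2) (hg.comp (measurable_fst.sub measurable_snd)))
    · exact Measurable.ite (measurableSet_lt measurable_const measurable_fst)
        measurable_const measurable_const
    · exact Measurable.ite (measurableSet_lt measurable_const measurable_snd)
        measurable_const measurable_const
  rw [Measure.volume_eq_prod, lintegral_prod_symm _ hm.aemeasurable]
  have h1 : ∀ y : ℝ, ∫⁻ x : ℝ, ENNReal.ofReal
        (((if 0 < x then (1 : ℝ) else 0) - (if 0 < y then (1 : ℝ) else 0)) ^ 2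
          * g (x - y)) = ∫⁻ z : ℝ, ENNReal.ofReal
        (((if 0 < z + y then (1 : ℝ) else 0) - (if 0 < y then (1 : ℝ) else 0)) ^ 2
          * g z) := by
    intro y
    rw [← lintegral_add_right_eq_self _ y]
    simp only [add_sub_cancel_right]
  simp only [h1]
  rw [lintegral_lintegral_swap]
  · refine lintegral_congr fun z => ?_
    have h2 : ∀ y : ℝ, ENNReal.ofReal
        (((if 0 < z + y then (1 : ℝ) else 0) - (if 0 < y then (1 : ℝ) else 0)) ^ 2
          * g z) = (Set.uIoc 0 (-z)).indicator (fun _ => ENNReal.ofReal (g z)) y := by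
      intro y
      by_cases hy : y ∈ Set.uIoc 0 (-z)
      · rw [Set.indicator_of_mem hy]
        rw [Set.mem_uIoc] at hy
        rcases hy with ⟨a, b⟩ | ⟨a, b⟩
        · rw [if_neg (by linarith), if_pos a]; norm_num
        · rw [if_pos (by linarith), if_neg (by linarith)]; norm_num
      · rw [Set.indicator_of_notMem hy]
        rw [Set.mem_uIoc, not_or, not_and, not_and] at hy
        by_cases a : 0 < y
        · have := hy.1 a
          rw [if_pos (by linarith), if_pos a]; simp
        · have : ¬ 0 < z + y := fun h => hy.2 (by linarith) (by linarith)
          rw [if_neg this, if_neg a]; simp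
    simp only [h2]
    rw [lintegral_indicator_const measurableSet_uIoc, Real.volume_uIoc,
      ENNReal.ofReal_mul (abs_nonneg z), mul_comm]
    simp
  · have hc : Measurable (fun p : ℝ × ℝ => (p.2 + p.1, p.1)) := by fun_prop
    have := (hm.comp hc).aemeasurable (μ := (volume : Measure ℝ).prod volume)
    simpa [Function.comp_def, Function.uncurry_def] using this
end
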